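/- arXiv:0903.2864 — 2 statements merged into one kernel-verified Lean document; each statement's English description precedes it below -/
import Mathlib

section
/- Let k ≥ 2 and let S_2≀S_k ≤ S_{2k} be the subgroup of permutations mapping each pair {2i−1,2i} (1 ≤ i ≤ k) to some pair {2j−1,2j}; each g ∈ S_2≀S_k induces a permutation ḡ of the set of k pairs. Let S_2≀A_k = {g ∈ S_2≀S_k : ḡ is even}. Then the permutation character of S_{2k} on the cosets of S_2≀A_k is multiplicity-free if and only if there is NO strictly decreasing sequence of positive integers b_1 > b_2 > … > b_s ≥ 1 (with s ≥ 1) such that k = 4(b_1 + … + b_s) + s or k = 4(b_1 + … + b_s) + s + 1. -/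
/-- The permutation character of `G` on the cosets of `H` is multiplicity-free:
every irreducible complex representation of `G` has at most a one-dimensional
subspace of `H`-fixed vectors. -/
noncomputable def IsMultFree {G : Type} [Group G] (H : Subgroup G) : Prop :=
  ∀ V : FDRep ℂ G, CategoryTheory.Simple V →
    Module.finrank ℂ (Representation.invariants (V.ρ.comp H.subtype)) ≤ 1

/-- `σ` is the permutation of the `k` pairs `{2i−1, 2i}` of `{1,…,2k}` induced by the
permutation `g` (so `g` maps each pair onto a pair, pair `j` going to pair `σ j`). -/
def InducedPairPerm {k : ℕ} (g : Equiv.Perm (Fin (2 * k))) (σ : Equiv.Perm (Fin k)) : Prop :=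
  ∀ i : Fin (2 * k), ((g i : ℕ) / 2) = (σ ⟨(i : ℕ) / 2, by have := i.isLt; omega⟩ : ℕ)

section RepPart

open CategoryTheory

theorem fd_simple_sub {G : Type} [Group G] (V : FDRep ℂ G) (hV : Simple V)
    (W : Submodule ℂ V) (hW : ∀ g : G, ∀ w ∈ W, V.ρ g w ∈ W) (hne : W ≠ ⊥) : W = ⊤ := by
  let r : Representation ℂ G W :=
    { toFun := fun g => (V.ρ g).restrict (hW g)
      map_one' := by ext; simp [LinearMap.restrict_apply]
      map_mul' := by intro a b; ext; simp [LinearMap.restrict_apply] }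
  let f : FDRep.of r ⟶ V := ⟨InducedCategory.homMk (ModuleCat.ofHom W.subtype), fun g => by
    ext x; rfl⟩
  have hinj : Function.Injective (fun x : W => (x : V)) := Subtype.val_injective
  have : Mono f := by
    apply (forget (FDRep ℂ G)).mono_of_mono_map
    rw [mono_iff_injective]
    exact hinj
  have hf : f ≠ 0 := by
    intro h0
    apply hne
    rw [Submodule.eq_bot_iff]
    intro w hw
    have := congrArg (fun φ : FDRep.of r ⟶ V => φ.hom.hom.hom ⟨w, hw⟩) h0
    exact this
  have hiso : IsIso f := isIso_of_mono_of_nonzero hf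
  have hs : Function.Surjective (fun x : W => (x : V)) := by
    have : IsIso ((forget (FDRep ℂ G)).map f) := inferInstance
    rw [isIso_iff_bijective] at this
    exact this.2
  rw [eq_top_iff]
  intro v _
  obtain ⟨w, rfl⟩ := hs v
  exact w.2

theorem fd_mono_inj {G : Type} [Group G] {V U : FDRep ℂ G} (p : V ⟶ U) (hp : Mono p) :
    Function.Injective p.hom.hom.hom := by
  let W : Submodule ℂ V := LinearMap.ker p.hom.hom.hom
  have hW : ∀ g : G, ∀ w ∈ W, V.ρ g w ∈ W := by
    intro g w hw
    have h1 : p.hom.hom.hom (V.ρ g w) = U.ρ g (p.hom.hom.hom w) :=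
      congrArg (fun φ => φ.hom.hom w) (p.comm g)
    have h2 : p.hom.hom.hom w = 0 := hw
    change p.hom.hom.hom (V.ρ g w) = 0
    rw [h1, h2, map_zero]
  let r : Representation ℂ G W :=
    { toFun := fun g => (V.ρ g).restrict (hW g)
      map_one' := by ext; simp [LinearMap.restrict_apply]
      map_mul' := by intro a b; ext; simp [LinearMap.restrict_apply] }
  let f : FDRep.of r ⟶ V := ⟨InducedCategory.homMk (ModuleCat.ofHom W.subtype), fun g => by
    ext x; rfl⟩
  have h0 : f ≫ p = 0 ≫ p := by
    rw [Limits.zero_comp]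
    ext x
    exact x.2
  have h1 : f = 0 := (cancel_mono p).1 h0
  rw [← LinearMap.ker_eq_bot, Submodule.eq_bot_iff]
  intro w hw
  have := congrArg (fun φ : FDRep.of r ⟶ V => φ.hom.hom.hom ⟨w, hw⟩) h1
  exact this

theorem fd_simple_of {G : Type} [Group G] {M : Type} [AddCommGroup M] [Module ℂ M]
    [Module.Finite ℂ M] [Nontrivial M] (r : Representation ℂ G M)
    (h : ∀ W : Submodule ℂ M, (∀ g : G, ∀ w ∈ W, r g w ∈ W) → W ≠ ⊥ → W = ⊤) :
    Simple (FDRep.of r) := by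
  constructor
  intro Y f hm
  constructor
  · intro hi h0
    subst h0
    have hb : IsIso ((forget (FDRep ℂ G)).map (0 : Y ⟶ FDRep.of r)) := inferInstance
    rw [isIso_iff_bijective] at hb
    obtain ⟨x, y, hxy⟩ := exists_pair_ne M
    obtain ⟨x', hx'⟩ := hb.2 x
    obtain ⟨y', hy'⟩ := hb.2 y
    apply hxy
    rw [← hx', ← hy']
    rfl
  · intro h0
    have hinj : Function.Injective f.hom.hom.hom :=
      fd_mono_inj f hm
    have hr : LinearMap.range f.hom.hom.hom = ⊤ := by
      apply h
      · rintro g _ ⟨y, rfl⟩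
        refine ⟨Y.ρ g y, ?_⟩
        have := f.comm g
        exact congrArg (fun φ => φ.hom.hom y) this
      · intro hb
        apply h0
        rw [LinearMap.range_eq_bot] at hb
        ext x
        exact congrArg (fun φ => φ x) hb
    have hs : Function.Surjective f.hom.hom.hom := LinearMap.range_eq_top.mp hr
    have : IsIso ((forget (FDRep ℂ G)).map f) := by
      rw [isIso_iff_bijective]
      exact ⟨hinj, hs⟩
    exact isIso_of_reflects_iso f (forget (FDRep ℂ G))

open MonoidAlgebra in
theorem hecke_comm {G : Type} [Group G] (H : Subgroup G) [Fintype H]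
    (hs : ∀ g : G, ∃ h₁ ∈ H, ∃ h₂ ∈ H, g⁻¹ = h₁ * g * h₂)
    (e : MonoidAlgebra ℂ G) (he : e = ∑ h : H, of ℂ G (h : G)) (x y : MonoidAlgebra ℂ G) :
    (e * x * e) * (e * y * e) = (e * y * e) * (e * x * e) := by
  have hl : ∀ h ∈ H, of ℂ G h * e = e := by
    intro h hh
    rw [he, Finset.mul_sum]
    simp_rw [← map_mul]
    exact Fintype.sum_equiv (Equiv.mulLeft (⟨h, hh⟩ : H)) _ _ (fun x => rfl)
  have hr : ∀ h ∈ H, e * of ℂ G h = e := by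
    intro h hh
    rw [he, Finset.sum_mul]
    simp_rw [← map_mul]
    exact Fintype.sum_equiv (Equiv.mulRight (⟨h, hh⟩ : H)) _ _ (fun x => rfl)
  let F : G →* (MonoidAlgebra ℂ G)ᵐᵒᵖ :=
    { toFun := fun g => MulOpposite.op (of ℂ G g⁻¹)
      map_one' := by rw [inv_one, map_one, MulOpposite.op_one]
      map_mul' := by intro a b; rw [← MulOpposite.op_mul, ← map_mul, mul_inv_rev] }
  let ι : MonoidAlgebra ℂ G →ₐ[ℂ] (MonoidAlgebra ℂ G)ᵐᵒᵖ := MonoidAlgebra.lift ℂ _ G F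
  have hι : ∀ g, ι (of ℂ G g) = MulOpposite.op (of ℂ G g⁻¹) := by
    intro g
    exact MonoidAlgebra.lift_of _ _
  have hιe : ι e = MulOpposite.op e := by
    rw [he, map_sum]
    simp_rw [hι]
    rw [← Finset.op_sum]
    congr 1
    exact Fintype.sum_equiv (Equiv.inv H) _ _ (fun x => rfl)
  have key : ∀ x, ι (e * x * e) = MulOpposite.op (e * x * e) := by
    intro x
    induction x using MonoidAlgebra.induction_on with
    | of g =>
      obtain ⟨h₁, hh₁, h₂, hh₂, hg⟩ := hs g
      rw [map_mul, map_mul, hι, hιe, ← MulOpposite.op_mul, ← MulOpposite.op_mul, hg, map_mul,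
        map_mul]
      congr 1
      rw [mul_assoc (of ℂ G h₁), ← mul_assoc e, ← mul_assoc e, hr _ hh₁, mul_assoc, mul_assoc,
        mul_assoc, hl _ hh₂]
    | add a b ha hb => rw [mul_add, add_mul, map_add, ha, hb, MulOpposite.op_add]
    | smul c a ha => rw [mul_smul_comm, smul_mul_assoc, map_smul, ha, MulOpposite.op_smul]
  apply MulOpposite.op_injective
  have h1 := key (x * e * e * y)
  have h2 : e * (x * e * e * y) * e = (e * x * e) * (e * y * e) := by simp only [mul_assoc]
  rw [h2, map_mul, key, key, ← MulOpposite.op_mul] at h1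
  exact h1.symm

open MonoidAlgebra in
theorem multFree_of_symm {G : Type} [Group G] [Finite G] (H : Subgroup G)
    (hs : ∀ g : G, ∃ h₁ ∈ H, ∃ h₂ ∈ H, g⁻¹ = h₁ * g * h₂) : IsMultFree H := by
  classical
  intro V hV
  have : Fintype H := Fintype.ofFinite H
  set I := Representation.invariants (V.ρ.comp H.subtype) with hI
  have memI : ∀ v : V, v ∈ I ↔ ∀ h ∈ H, V.ρ h v = v := by
    intro v
    rw [hI, Representation.mem_invariants]
    exact ⟨fun a h hh => a ⟨h, hh⟩, fun a h => a h h.2⟩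
  set e : MonoidAlgebra ℂ G := ∑ h : H, of ℂ G (h : G) with he
  let φ := Representation.asAlgebraHom V.ρ
  have hφ : ∀ g, φ (of ℂ G g) = V.ρ g := fun g => Representation.asAlgebraHom_of V.ρ g
  have hφe : ∀ v, φ e v = ∑ h : H, V.ρ h v := by
    intro v
    rw [he, map_sum, LinearMap.sum_apply]
    simp_rw [hφ]
  have hEI : ∀ v, φ e v ∈ I := by
    intro v
    rw [memI]
    intro h hh
    rw [hφe, map_sum]
    refine Fintype.sum_equiv (Equiv.mulLeft (⟨h, hh⟩ : H)) _ _ (fun x => ?_)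
    change _ = V.ρ (h * x) v
    rw [map_mul]; rfl
  have hcard : (Fintype.card H : ℂ) ≠ 0 := by exact_mod_cast Fintype.card_ne_zero
  have hEv : ∀ v ∈ I, φ e v = (Fintype.card H : ℂ) • v := by
    intro v hv
    rw [hφe, Finset.sum_congr rfl (fun (h : H) _ => (memI v).1 hv h h.2)]
    simp [Finset.sum_const, Finset.card_univ, Nat.cast_smul_eq_nsmul]
  let T : MonoidAlgebra ℂ G → Module.End ℂ I := fun x =>
    (φ (e * x * e)).restrict (p := I) (q := I) (by
      intro v _
      rw [mul_assoc, map_mul]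
      exact hEI _)
  have hT : ∀ x v, ((T x v : I) : V) = φ (e * x * e) v := fun x v => rfl
  have hTc : ∀ x y v, T x (T y v) = T y (T x v) := by
    intro x y v
    apply Subtype.ext
    rw [hT, hT, hT, hT, ← Module.End.mul_apply, ← Module.End.mul_apply, ← map_mul, ← map_mul,
      hecke_comm H hs e he]
  have hcyc : ∀ v : I, v ≠ 0 → ∀ w : I, ∃ x, w = T x v := by
    intro v hv w
    let W : Submodule ℂ V := LinearMap.range (LinearMap.applyₗ (v : V) ∘ₗ φ.toLinearMap)
    have hW : W = ⊤ := by
      apply fd_simple_sub V hV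
      · rintro g _ ⟨x, rfl⟩
        refine ⟨of ℂ G g * x, ?_⟩
        change φ (of ℂ G g * x) v = V.ρ g (φ x v)
        rw [map_mul, hφ]; rfl
      · intro hb
        apply hv
        have : (v : V) ∈ W := ⟨1, by change φ 1 v = v; rw [map_one]; rfl⟩
        rw [hb] at this
        exact Subtype.ext this
    have : (w : V) ∈ W := hW ▸ Submodule.mem_top
    obtain ⟨x, hx⟩ := this
    change φ x v = w at hx
    refine ⟨((Fintype.card H : ℂ)⁻¹ * (Fintype.card H : ℂ)⁻¹) • x, ?_⟩
    apply Subtype.ext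
    rw [hT, map_mul, map_mul, Module.End.mul_apply, Module.End.mul_apply, hEv _ v.2, map_smul,
      map_smul, map_smul, LinearMap.smul_apply, hx, map_smul, hEv _ w.2, smul_smul, smul_smul]
    field_simp
    simp
  have hscal : ∀ x, ∃ c : ℂ, ∀ w, T x w = c • w := by
    intro x
    by_cases hn : Nontrivial I
    · obtain ⟨c, hc⟩ := Module.End.exists_eigenvalue (T x)
      obtain ⟨v, hv⟩ := hc.exists_hasEigenvector
      refine ⟨c, fun w => ?_⟩
      obtain ⟨y, rfl⟩ := hcyc v hv.2 w
      rw [hTc, hv.apply_eq_smul, map_smul]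
    · rw [not_nontrivial_iff_subsingleton] at hn
      exact ⟨0, fun w => Subsingleton.elim _ _⟩
  by_cases hn : Nontrivial I
  · obtain ⟨v, hv⟩ := exists_ne (0 : I)
    apply finrank_le_one v
    intro w
    obtain ⟨x, rfl⟩ := hcyc v hv w
    obtain ⟨c, hc⟩ := hscal x
    exact ⟨c, (hc v).symm⟩
  · rw [not_nontrivial_iff_subsingleton] at hn
    rw [Module.finrank_zero_of_subsingleton]
    exact zero_le_one

open MonoidAlgebra in
theorem fd_simple_module {G : Type} [Group G] {M : Type} [AddCommGroup M] [Module ℂ M]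
    [Module (MonoidAlgebra ℂ G) M] [IsScalarTower ℂ (MonoidAlgebra ℂ G) M]
    [Module.Finite ℂ M] (hM : IsSimpleModule (MonoidAlgebra ℂ G) M) :
    Simple (FDRep.of ((Algebra.lsmul ℂ ℂ M).toMonoidHom.comp (of ℂ G) : Representation ℂ G M)) := by
  have : Nontrivial M := IsSimpleModule.nontrivial (MonoidAlgebra ℂ G) M
  apply fd_simple_of
  intro W hW hne
  let N : Submodule (MonoidAlgebra ℂ G) M :=
    { carrier := W
      add_mem' := fun ha hb => W.add_mem ha hb
      zero_mem' := W.zero_mem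
      smul_mem' := by
        intro c x hx
        induction c using MonoidAlgebra.induction_on with
        | of g => exact hW g x hx
        | add a b ha hb => rw [add_smul]; exact W.add_mem ha hb
        | smul c a ha => rw [smul_assoc]; exact W.smul_mem c ha }
  rcases eq_bot_or_eq_top N with h | h
  · exfalso
    apply hne
    rw [Submodule.eq_bot_iff]
    intro w hw
    have : w ∈ N := hw
    rw [h] at this
    exact this
  · rw [eq_top_iff]
    intro w _
    have : w ∈ N := h ▸ Submodule.mem_top
    exact this

open MonoidAlgebra in
theorem exists_simple_act {G : Type} [Group G] [Finite G] (f : MonoidAlgebra ℂ G) (hf : f ≠ 0) :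
    ∃ S : Submodule (MonoidAlgebra ℂ G) (MonoidAlgebra ℂ G),
      IsSimpleModule (MonoidAlgebra ℂ G) S ∧ ∃ s : S, f • s ≠ 0 := by
  by_contra! hcon
  have htop := IsSemisimpleModule.sSup_simples_eq_top (MonoidAlgebra ℂ G) (MonoidAlgebra ℂ G)
  have h1 : (1 : MonoidAlgebra ℂ G) ∈ sSup {m : Submodule (MonoidAlgebra ℂ G) (MonoidAlgebra ℂ G) | IsSimpleModule (MonoidAlgebra ℂ G) m} := htop ▸ Submodule.mem_top
  rw [sSup_eq_iSup'] at h1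
  have hall : ∀ z ∈ (⨆ a : {m : Submodule (MonoidAlgebra ℂ G) (MonoidAlgebra ℂ G) | IsSimpleModule (MonoidAlgebra ℂ G) m}, (a : Submodule (MonoidAlgebra ℂ G) (MonoidAlgebra ℂ G))), f • z = 0 := by
    intro z hz
    induction hz using Submodule.iSup_induction' with
    | mem i x hx => exact congrArg Subtype.val (hcon i.1 i.2 ⟨x, hx⟩)
    | zero => exact smul_zero f
    | add x y _ _ hx hy => rw [smul_add, hx, hy, add_zero]
  apply hf
  simpa using hall 1 h1

open MonoidAlgebra in
theorem not_multFree {G L : Type} [Group G] [Finite G] [Group L] [Finite L] (i : L →* G)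
    (χ : L →* ℤˣ) (t : L) (ht : χ t = -1) (H : Subgroup G)
    (hH : ∀ h ∈ H, ∃ l, i l = h ∧ χ l = 1) (g : G)
    (hg : ∀ l l', i l * g * i l' = g → χ l = 1) : ¬ IsMultFree H := by
  classical
  have : Fintype L := Fintype.ofFinite L
  intro hmf
  let e₁ : MonoidAlgebra ℂ G := ∑ l : L, of ℂ G (i l)
  let e₂ : MonoidAlgebra ℂ G := ∑ l : L, ((χ l : ℤ) : ℂ) • of ℂ G (i l)
  have he₁ : ∀ l, of ℂ G (i l) * e₁ = e₁ := by
    intro l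
    simp only [e₁]
    rw [Finset.mul_sum]
    simp_rw [← map_mul]
    exact Fintype.sum_equiv (Equiv.mulLeft l) _ _ (fun x => rfl)
  have he₂ : ∀ l, of ℂ G (i l) * e₂ = ((χ l : ℤ) : ℂ) • e₂ := by
    intro l
    simp only [e₂]
    rw [Finset.mul_sum, Finset.smul_sum]
    simp_rw [mul_smul_comm, ← map_mul]
    refine Fintype.sum_equiv (Equiv.mulLeft l) _ _ (fun x => ?_)
    rw [Equiv.coe_mulLeft, smul_smul, map_mul χ, Units.val_mul, Int.cast_mul, ← mul_assoc]
    congr 1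
    rcases Int.units_eq_one_or (χ l) with h | h <;> simp [h]
  have hf : e₂ * of ℂ G g * e₁ ≠ 0 := by
    intro h0
    have h1 : (e₂ * of ℂ G g * e₁).coeff g = ∑ l : L, ∑ l' : L, if i l * g * i l' = g then (1 : ℂ) else 0 := by
      simp only [e₁, e₂]
      rw [Finset.sum_mul, Finset.sum_mul_sum]
      simp only [smul_mul_assoc, ← map_mul]
      rw [coeff_sum, Finset.sum_apply']
      refine Finset.sum_congr rfl fun l _ => ?_
      rw [coeff_sum, Finset.sum_apply']
      refine Finset.sum_congr rfl fun l' _ => ?_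
      by_cases hc : i l * g * i l' = g
      · rw [if_pos hc, hc, hg l l' hc]
        simp [of_apply]
      · rw [if_neg hc]
        simp [of_apply, hc]
    rw [h0] at h1
    have h2 : (∑ l : L, ∑ l' : L, if i l * g * i l' = g then (1 : ℝ) else 0) = 0 := by
      have : ((∑ l : L, ∑ l' : L, if i l * g * i l' = g then (1 : ℝ) else 0 : ℝ) : ℂ) = 0 := by
        rw [Complex.ofReal_sum]
        refine Eq.trans (Finset.sum_congr rfl fun l _ => ?_) h1.symm
        rw [Complex.ofReal_sum]
        refine Finset.sum_congr rfl fun l' _ => ?_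
        split_ifs <;> simp
      exact_mod_cast this
    have h3 : (0 : ℝ) < ∑ l : L, ∑ l' : L, if i l * g * i l' = g then (1 : ℝ) else 0 := by
      apply Finset.sum_pos'
      · intro l _
        apply Finset.sum_nonneg
        intro l' _
        split_ifs <;> norm_num
      · refine ⟨1, Finset.mem_univ _, ?_⟩
        apply Finset.sum_pos'
        · intro l' _
          split_ifs <;> norm_num
        · exact ⟨1, Finset.mem_univ _, by simp⟩
    linarith
  obtain ⟨S, hS, s, hs⟩ := exists_simple_act _ hf
  have hfin : Module.Finite ℂ (MonoidAlgebra ℂ G) := inferInstance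
  have hfinS : Module.Finite ℂ S :=
    inferInstanceAs (Module.Finite ℂ (S.restrictScalars ℂ))
  have hm := hmf _ (fd_simple_module (G := G) (M := S) hS)
  set I := Representation.invariants ((FDRep.of ((Algebra.lsmul ℂ ℂ S).toMonoidHom.comp (of ℂ G) : Representation ℂ G S)).ρ.comp H.subtype) with hI
  have memI : ∀ v : S, v ∈ I ↔ ∀ h ∈ H, of ℂ G h • v = v := by
    intro v
    rw [hI, Representation.mem_invariants]
    exact ⟨fun a h hh => a ⟨h, hh⟩, fun a h => a h h.2⟩
  let u : S := (e₂ * of ℂ G g * e₁) • s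
  let w : S := e₁ • s
  have hw0 : w ≠ 0 := by
    intro h
    apply hs
    rw [mul_smul]
    change (e₂ * of ℂ G g) • w = 0
    rw [h, smul_zero]
  have hw : ∀ l, of ℂ G (i l) • w = w := by
    intro l
    simp only [w]
    rw [smul_smul, he₁]
  have hu : ∀ l, of ℂ G (i l) • u = ((χ l : ℤ) : ℂ) • u := by
    intro l
    simp only [u]
    rw [smul_smul, mul_assoc, ← mul_assoc, he₂, smul_mul_assoc, smul_assoc]
  have hwI : w ∈ I := by
    rw [memI]
    intro h hh
    obtain ⟨l, rfl, _⟩ := hH h hh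
    exact hw l
  have huI : u ∈ I := by
    rw [memI]
    intro h hh
    obtain ⟨l, rfl, h1⟩ := hH h hh
    rw [hu l, h1]
    simp
  rw [finrank_le_one_iff] at hm
  obtain ⟨v, hv⟩ := hm
  obtain ⟨c, hc⟩ := hv ⟨w, hwI⟩
  obtain ⟨d, hd⟩ := hv ⟨u, huI⟩
  have hc' : c • (v : S) = w := congrArg Subtype.val hc
  have hd' : d • (v : S) = u := congrArg Subtype.val hd
  have hc0 : c ≠ 0 := by
    rintro rfl
    rw [zero_smul] at hc'
    exact hw0 hc'.symm
  have huw : u = (d * c⁻¹) • w := by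
    rw [← hc', ← hd', smul_smul, mul_assoc, inv_mul_cancel₀ hc0, mul_one]
  have h1 := hu t
  have h2 : of ℂ G (i t) • u = u := by
    rw [huw, smul_comm, hw]
  rw [h2, ht] at h1
  apply hs
  change u = 0
  have h4 : (2 : ℂ) • u = 0 := by
    rw [two_smul]
    nth_rewrite 1 [h1]
    rw [Units.val_neg, Units.val_one, Int.cast_neg, Int.cast_one]
    exact (congrArg (· + u) (neg_one_smul ℂ u)).trans (neg_add_cancel u)
  exact (smul_eq_zero.1 h4).resolve_left two_ne_zero

end RepPart

section CombPart

open Equiv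

theorem exists_refl {Y : Type} (σ : Perm Y) : ∃ ρ : Y → Y, (∀ y, ρ (ρ y) = y) ∧
    (∀ y, ρ (σ y) = σ⁻¹ (ρ y)) ∧ (∀ y, σ.SameCycle y (ρ y)) ∧
    (∀ y, ∃ v, σ.SameCycle y v ∧ ρ v = v) ∧
    (∀ n, Odd n → σ ^ n = 1 → ∀ y z, σ.SameCycle y z → ρ y = y → ρ z = z → y = z) := by
  classical
  let S := Perm.SameCycle.setoid σ
  let rep : Y → Y := fun y => Quotient.out (Quotient.mk S y)
  have hrep : ∀ y, σ.SameCycle (rep y) y := fun y => Quotient.exact (Quotient.out_eq (Quotient.mk S y))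
  have hrepeq : ∀ y z, σ.SameCycle y z → rep y = rep z := by
    intro y z h
    exact congrArg Quotient.out (Quotient.sound (s := S) h)
  choose i hi using hrep
  let ρ : Y → Y := fun y => (σ ^ (- i y)) (rep y)
  have key : ∀ (j : ℤ) y, ρ ((σ ^ j) (rep y)) = (σ ^ (-j)) (rep y) := by
    intro j y
    have hv : rep ((σ ^ j) (rep y)) = rep y := by
      apply hrepeq
      exact Perm.SameCycle.trans (Perm.SameCycle.symm ⟨j, rfl⟩) ⟨i y, hi y⟩
    have h1 := hi ((σ ^ j) (rep y))
    change (σ ^ (- i ((σ ^ j) (rep y)))) (rep ((σ ^ j) (rep y))) = _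
    rw [hv] at h1 ⊢
    generalize i ((σ ^ j) (rep y)) = m at *
    rw [zpow_neg, zpow_neg, Perm.inv_eq_iff_eq]
    have h2 : (σ ^ m * (σ ^ j)⁻¹) (rep y) = ((σ ^ j)⁻¹ * σ ^ m) (rep y) := by
      rw [← zpow_neg, ← zpow_add, ← zpow_add, add_comm]
    rw [Perm.mul_apply, Perm.mul_apply, h1, ← Perm.mul_apply (σ ^ j)⁻¹, inv_mul_cancel, Perm.one_apply] at h2
    exact h2.symm
  have hrr : ∀ y, rep (rep y) = rep y := fun y => hrepeq _ _ ⟨i y, hi y⟩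
  refine ⟨ρ, ?_, ?_, ?_, ?_, ?_⟩
  · intro y
    change ρ ((σ ^ (- i y)) (rep y)) = y
    rw [key, neg_neg, hi]
  · intro y
    have h1 : σ y = (σ ^ (1 + i y)) (rep y) := by
      rw [zpow_add, Perm.mul_apply, hi, zpow_one]
    rw [h1, key]
    change _ = σ⁻¹ ((σ ^ (- i y)) (rep y))
    rw [← Perm.mul_apply, neg_add, zpow_add, zpow_neg_one]
  · intro y
    exact Perm.SameCycle.trans (Perm.SameCycle.symm ⟨i y, hi y⟩) ⟨- i y, rfl⟩
  · intro y
    refine ⟨rep y, Perm.SameCycle.symm ⟨i y, hi y⟩, ?_⟩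
    have := key 0 y
    simpa using this
  · intro n hn hσ y z hyz hy hz
    have hfix : ∀ y, ρ y = y → y = rep y := by
      intro y hy
      obtain ⟨l, rfl⟩ := hn
      have h1 : (σ ^ (- i y)) (rep y) = (σ ^ (i y)) (rep y) := by rw [hi]; exact hy
      have h2 : (σ ^ (2 * i y)) (rep y) = rep y := by
        rw [two_mul, zpow_add, Perm.mul_apply, ← h1, ← Perm.mul_apply, ← zpow_add]
        simp
      have h3 : (σ ^ (2 * i y * l)) (rep y) = rep y := by
        rw [zpow_mul, zpow_natCast]
        exact Function.IsFixedPt.perm_pow h2 l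
      have h4 : σ ^ (i y + 2 * i y * l) = 1 := by
        have : i y + 2 * i y * l = ((2 * l + 1 : ℕ) : ℤ) * i y := by push_cast; ring
        rw [this, zpow_mul, zpow_natCast, hσ, one_zpow]
      have h5 : (σ ^ (i y + 2 * i y * l)) (rep y) = rep y := by rw [h4]; rfl
      rw [zpow_add, Perm.mul_apply, h3, hi] at h5
      exact h5
    rw [hfix y hy, hfix z hz, hrepeq y z hyz]

theorem exists_color {X : Type} [Finite X] (a b : Perm X) (ha : ∀ x, a (a x) = x)
    (hb : ∀ x, b (b x) = x) (ha' : ∀ x, a x ≠ x) (hb' : ∀ x, b x ≠ x) :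
    ∃ d : X → Bool, (∀ x, d (a x) = !d x) ∧ (∀ x, d (b x) = !d x) := by
  classical
  let c := a * b
  let S := Perm.SameCycle.setoid c
  obtain ⟨n, ⟨E⟩⟩ := Finite.exists_equiv_fin (Quotient S)
  let rk : X → Fin n := fun x => E (Quotient.mk S x)
  have hrk : ∀ x y, c.SameCycle x y → rk x = rk y := fun x y h =>
    congrArg E (Quotient.sound (s := S) h)
  have hrk' : ∀ x y, rk x = rk y → c.SameCycle x y := fun x y h =>
    Quotient.exact (s := S) (E.injective h)
  have hac : ∀ (l : ℤ) x, a ((c ^ l) x) = (c ^ (-l)) (a x) := by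
    intro l x
    have h1 : a * c * a⁻¹ = c⁻¹ := by
      have e1 : a * a = 1 := by ext x; exact ha x
      have e2 : b * b = 1 := by ext x; exact hb x
      have e3 : a⁻¹ = a := inv_eq_of_mul_eq_one_left e1
      have e4 : b⁻¹ = b := inv_eq_of_mul_eq_one_left e2
      simp only [c]
      rw [mul_inv_rev, e3, e4, ← mul_assoc, e1, one_mul]
    have h2 : a * c ^ l * a⁻¹ = c ^ (-l) := by
      rw [← conj_zpow, h1, inv_zpow, zpow_neg]
    rw [← h2]
    simp
  have hns : ∀ x, ¬ c.SameCycle x (a x) := by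
    rintro x ⟨n, hn⟩
    rcases Int.even_or_odd' n with ⟨l, rfl | rfl⟩
    · apply ha' ((c ^ l) x)
      rw [hac, ← hn, ← Perm.mul_apply, ← zpow_add]
      congr 2; ring
    · apply hb' ((c ^ l) x)
      apply a.injective
      rw [hac, ← hn, ← Perm.mul_apply (c ^ (-l)), ← zpow_add]
      have : -l + (2 * l + 1) = 1 + l := by ring
      rw [this, zpow_add, zpow_one]
      rfl
  have hda : ∀ x, decide (rk (a x) < rk (a (a x))) = !decide (rk x < rk (a x)) := by
    intro x
    rw [ha]
    have : rk x ≠ rk (a x) := fun h => hns x (hrk' _ _ h)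
    rcases lt_or_gt_of_ne this with h | h
    · simp [h, h.le]
    · simp [h, h.le]
  refine ⟨fun x => decide (rk x < rk (a x)), hda, ?_⟩
  intro x
  have h1 : b x = a (c x) := by simp [c, ha]
  have h2 : rk (c x) = rk x := (hrk _ _ ⟨1, by simp⟩).symm
  have h3 : rk (a (c x)) = rk (a x) := by
    apply (hrk _ _ _).symm
    refine ⟨-1, ?_⟩
    have := hac 1 x
    rw [zpow_one] at this
    exact this.symm
  beta_reduce
  rw [h1, hda, h2, h3]

structure Model {X Y : Type} (a b : Perm X) (blk : X → Y) (p : Y × Bool ≃ X) (σ : Perm Y) : Prop where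
  pa : ∀ y s, a (p (y, s)) = p (y, !s)
  pb0 : ∀ y, b (p (y, false)) = p (σ y, true)
  pb1 : ∀ y, b (p (y, true)) = p (σ⁻¹ y, false)
  pblk : ∀ y s, blk (p (y, s)) = y

theorem exists_model {X Y : Type} [Finite X] (a b : Perm X) (ha : ∀ x, a (a x) = x)
    (hb : ∀ x, b (b x) = x) (ha' : ∀ x, a x ≠ x) (hb' : ∀ x, b x ≠ x) (blk : X → Y)
    (h1 : ∀ x, blk (a x) = blk x) (h2 : ∀ x z, blk x = blk z → z = x ∨ z = a x)
    (h3 : Function.Surjective blk) : ∃ p σ, Model a b blk p σ := by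
  obtain ⟨d, hda, hdb⟩ := exists_color a b ha hb ha' hb'
  have hbij : Function.Bijective (fun x => (blk x, d x)) := by
    constructor
    · intro x z h
      simp only [Prod.mk.injEq] at h
      rcases h2 x z h.1 with h' | h'
      · exact h'.symm
      · have := h.2
        rw [h', hda] at this
        simp at this
    · rintro ⟨y, s⟩
      obtain ⟨x, rfl⟩ := h3 y
      by_cases hs : d x = s
      · exact ⟨x, by simp [hs]⟩
      · refine ⟨a x, ?_⟩
        simp only [h1, hda, Prod.mk.injEq, true_and]
        cases s <;> cases hd : d x <;> simp_all
  let e := Equiv.ofBijective _ hbij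
  have he : ∀ x, e x = (blk x, d x) := fun x => rfl
  have hblk : ∀ y s, blk (e.symm (y, s)) = y := by
    intro y s
    have := e.apply_symm_apply (y, s)
    rw [he] at this
    exact congrArg Prod.fst this
  have hd : ∀ y s, d (e.symm (y, s)) = s := by
    intro y s
    have := e.apply_symm_apply (y, s)
    rw [he] at this
    exact congrArg Prod.snd this
  have hbe : ∀ y s, b (e.symm (y, s)) = e.symm (blk (b (e.symm (y, s))), !s) := by
    intro y s
    rw [Equiv.eq_symm_apply, he, hdb, hd]
  let σ : Perm Y :=
    { toFun := fun y => blk (b (e.symm (y, false)))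
      invFun := fun y => blk (b (e.symm (y, true)))
      left_inv := by
        intro y
        have := hbe y false
        simp only [Bool.not_false] at this
        simp only
        rw [← this, hb, hblk]
      right_inv := by
        intro y
        have := hbe y true
        simp only [Bool.not_true] at this
        simp only
        rw [← this, hb, hblk] }
  refine ⟨e.symm, σ, ?_, ?_, ?_, hblk⟩
  · intro y s
    rw [Equiv.eq_symm_apply, he, hda, hd, h1, hblk]
  · intro y; exact hbe y false
  · intro y; exact hbe y true

theorem model_invol {X Y : Type} {a b : Perm X} {blk : X → Y} {p : Y × Bool ≃ X} {σ : Perm Y}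
    (M : Model a b blk p σ) : ∃ x : Perm X, (∀ z, x (x z) = z) ∧ ∀ z, x (a z) = b (x z) := by
  obtain ⟨ρ, hρ, hρσ, -⟩ := exists_refl σ
  let f : Y × Bool → Y × Bool := fun q => if q.2 then (σ (ρ q.1), true) else (ρ q.1, false)
  have hf : ∀ q, f (f q) = q := by
    rintro ⟨y, s⟩
    cases s <;> simp [f, hρ, hρσ]
  let F : Perm (Y × Bool) := ⟨f, f, hf, hf⟩
  refine ⟨p.permCongr F, ?_, ?_⟩
  · intro z
    simp only [Equiv.permCongr_apply, Equiv.symm_apply_apply]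
    change p (f (f _)) = z
    rw [hf, Equiv.apply_symm_apply]
  · intro z
    obtain ⟨⟨y, s⟩, rfl⟩ := p.surjective z
    rw [M.pa]
    simp only [Equiv.permCongr_apply, Equiv.symm_apply_apply]
    change p (f _) = b (p (f _))
    cases s <;> simp [f, M.pb0, M.pb1]

theorem sign_invol {Y : Type} [Fintype Y] [DecidableEq Y] (r : Perm Y) (hr : r * r = 1) :
    Perm.sign r = (-1) ^ (r.support.card / 2) := by
  have h2 : r ^ 2 = 1 := by rw [pow_two, hr]
  have h3 : r.cycleType = Multiset.replicate (Multiset.card r.cycleType) 2 := by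
    rw [Multiset.eq_replicate]
    refine ⟨rfl, ?_⟩
    exact (Perm.pow_prime_eq_one_iff (p := 2)).1 h2
  have h4 := Perm.sum_cycleType r
  rw [Perm.sign_of_cycleType, ← h4]
  rw [h3]
  generalize Multiset.card r.cycleType = n
  simp only [Multiset.sum_replicate, Multiset.card_replicate, smul_eq_mul]
  rw [Nat.mul_div_cancel _ two_pos, pow_add, mul_comm n 2, pow_mul]
  simp

theorem sameCycle_color {Y : Type} {σ : Perm Y} {f : Y → Bool} (hf : ∀ y, f (σ y) = f y)
    {y z : Y} (h : σ.SameCycle y z) : f z = f y := by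
  obtain ⟨i, rfl⟩ := h
  have hinv : ∀ y, f (σ⁻¹ y) = f y := by
    intro y
    have := hf (σ⁻¹ y)
    rw [← Perm.mul_apply, mul_inv_cancel] at this
    exact this.symm
  induction i using Int.induction_on with
  | zero => rfl
  | succ i ih => rw [add_comm, zpow_add, Perm.mul_apply, zpow_one, hf, ih]
  | pred i ih => rw [sub_eq_add_neg, add_comm, zpow_add, Perm.mul_apply, zpow_neg_one, hinv, ih]

theorem exists_partial_refl {Y : Type} [Fintype Y] [DecidableEq Y] (σ : Perm Y) (n : ℕ)
    (hn : Odd n) (hσ : σ ^ n = 1) (f : Y → Bool) (hf : ∀ y, f (σ y) = f y) :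
    ∃ r : Perm Y, r * r = 1 ∧ (∀ y, f y = false → r y = y) ∧
      (∀ y, f y = true → r (σ y) = σ⁻¹ (r y)) ∧ (∀ y, f (r y) = f y) ∧
      (∀ y, f y = true → (Finset.univ.filter fun z => σ.SameCycle y z ∧ r z ≠ z).card + 1 =
        (Finset.univ.filter fun z => σ.SameCycle y z).card) := by
  obtain ⟨ρ, hρ, hρσ, hsc, hex, huniq⟩ := exists_refl σ
  let g : Y → Y := fun y => if f y then ρ y else y
  have hfg : ∀ y, f (g y) = f y := by
    intro y
    simp only [g]
    split_ifs
    · exact sameCycle_color hf (hsc y)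
    · rfl
  have hg : ∀ y, g (g y) = y := by
    intro y
    by_cases h : f y = true
    · have h1 : g y = ρ y := by simp [g, h]
      have h2 : f (ρ y) = true := by rw [← h1, hfg, h]
      rw [h1]
      simp [g, h2, hρ]
    · have h1 : g y = y := by simp [g, h]
      rw [h1, h1]
  refine ⟨⟨g, g, hg, hg⟩, by ext y; exact hg y, ?_, ?_, hfg, ?_⟩
  · intro y hy
    change g y = y
    simp [g, hy]
  · intro y hy
    change g (σ y) = σ⁻¹ (g y)
    simp [g, hf, hy, hρσ]
  · intro y hy
    obtain ⟨v, hv, hv'⟩ := hex y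
    have : (Finset.univ.filter fun z => σ.SameCycle y z ∧ g z ≠ z) =
        (Finset.univ.filter fun z => σ.SameCycle y z).erase v := by
      ext z
      simp only [Finset.mem_filter, Finset.mem_univ, true_and, Finset.mem_erase]
      constructor
      · rintro ⟨h1, h2⟩
        refine ⟨?_, h1⟩
        rintro rfl
        apply h2
        simp [g, hv']
      · rintro ⟨h1, h2⟩
        refine ⟨h2, ?_⟩
        have hz : f z = true := by rw [sameCycle_color hf h2, hy]
        simp only [g, hz, if_true]
        intro h3
        exact h1 (huniq n hn hσ z v (h2.symm.trans hv) h3 hv')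
    change (Finset.univ.filter fun z => σ.SameCycle y z ∧ g z ≠ z).card + 1 = _
    rw [this, Finset.card_erase_add_one]
    simp [hv]

theorem class_card {Y : Type} [Fintype Y] [DecidableEq Y] (σ : Perm Y) (y : Y) :
    (σ y = y → (Finset.univ.filter fun z => σ.SameCycle y z).card = 1) ∧
    (σ y ≠ y → (Finset.univ.filter fun z => σ.SameCycle y z).card ∈ σ.cycleType) := by
  constructor
  · intro h
    rw [Finset.card_eq_one]
    refine ⟨y, ?_⟩
    ext z
    simp only [Finset.mem_filter, Finset.mem_univ, true_and, Finset.mem_singleton]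
    constructor
    · rintro ⟨i, rfl⟩
      exact Function.IsFixedPt.perm_zpow h i
    · rintro rfl; exact Perm.SameCycle.refl _ _
  · intro h
    have : (Finset.univ.filter fun z => σ.SameCycle y z) = (σ.cycleOf y).support := by
      ext z
      rw [Perm.mem_support_cycleOf_iff' h]
      simp
    rw [this, Perm.cycleType_def, Multiset.mem_map]
    exact ⟨σ.cycleOf y, Perm.cycleOf_mem_cycleFactorsFinset_iff.2 (Perm.mem_support.2 h), rfl⟩

theorem exists_class {Y : Type} [Fintype Y] [DecidableEq Y] (σ : Perm Y) (c : ℕ) (hc : c ∈ σ.cycleType) :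
    ∃ y, (Finset.univ.filter fun z => σ.SameCycle y z).card = c := by
  rw [Perm.cycleType_def, Multiset.mem_map] at hc
  obtain ⟨τ, hτ, rfl⟩ := hc
  have hτ' : τ ∈ σ.cycleFactorsFinset := hτ
  obtain ⟨y, hy⟩ := (Perm.mem_cycleFactorsFinset_iff.1 hτ').1.nonempty_support
  refine ⟨y, ?_⟩
  have h1 := Perm.cycle_is_cycleOf hy hτ'
  have h : σ y ≠ y := by
    rw [← Perm.mem_support]
    exact Perm.mem_cycleFactorsFinset_support_le hτ' hy
  have : (Finset.univ.filter fun z => σ.SameCycle y z) = τ.support := by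
    ext z
    rw [h1, Perm.mem_support_cycleOf_iff' h]
    simp
  rw [this]; rfl

theorem odd_order {Y : Type} [Fintype Y] [DecidableEq Y] (σ : Perm Y)
    (h : ∀ c ∈ σ.cycleType, Odd c) : Odd (orderOf σ) := by
  have h1 : orderOf σ ∣ σ.cycleType.prod := by
    rw [← Perm.lcm_cycleType]
    exact Multiset.lcm_dvd.2 fun b hb => Multiset.dvd_prod hb
  have h2 : Odd σ.cycleType.prod := by
    apply Multiset.prod_induction (fun c : ℕ => Odd c)
    · exact fun a b ha hb => ha.mul hb
    · exact odd_one
    · exact h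
  exact Odd.of_dvd_nat h2 h1

/-- the condition on the cycle type -/
def Good {Y : Type} [Fintype Y] [DecidableEq Y] (σ : Perm Y) : Prop :=
  (∀ c ∈ σ.cycleType, c % 4 = 1) ∧ Fintype.card Y ≤ σ.cycleType.sum + 1 ∧
    ∀ i, σ.cycleType.count i ≤ 1

theorem good_of_even {X Y : Type} [Fintype Y] [DecidableEq Y] {a b : Perm X} {blk : X → Y}
    {p : Y × Bool ≃ X} {σ : Perm Y} (M : Model a b blk p σ)
    (h : ∀ (x : Perm X) (τ : Perm Y), (∀ z, x (a z) = a (x z)) → (∀ z, x (b z) = b (x z)) →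
      (∀ z, blk (x z) = τ (blk z)) → Perm.sign τ = 1) : Good σ := by
  classical
  have hc : Subgroup.centralizer {σ} ≤ alternatingGroup Y := by
    intro τ hτ
    rw [Subgroup.mem_centralizer_singleton_iff] at hτ
    have hτ1 : ∀ y, τ (σ y) = σ (τ y) := fun y => congrArg (fun φ : Perm Y => φ y) hτ
    have hτ2 : ∀ y, τ (σ⁻¹ y) = σ⁻¹ (τ y) := by
      intro y
      rw [Perm.eq_inv_iff_eq, ← hτ1]
      simp
    rw [Perm.mem_alternatingGroup]
    refine h (p.permCongr (τ.prodCongr (Equiv.refl Bool))) τ ?_ ?_ ?_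
    · intro z
      obtain ⟨⟨y, s⟩, rfl⟩ := p.surjective z
      simp [M.pa]
    · intro z
      obtain ⟨⟨y, s⟩, rfl⟩ := p.surjective z
      cases s
      · simp [M.pb0, hτ1]
      · have hτ2' : ∀ y, τ (σ.symm y) = σ.symm (τ y) := hτ2
        simp [M.pb1, hτ2']
    · intro z
      obtain ⟨⟨y, s⟩, rfl⟩ := p.surjective z
      simp [M.pblk]
  rw [Perm.centralizer_le_alternating_iff] at hc
  obtain ⟨hodd, hcard, hcount⟩ := hc
  refine ⟨?_, hcard, hcount⟩
  intro c hcc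
  obtain ⟨y₀, hy₀⟩ := exists_class σ c hcc
  let f : Y → Bool := fun z => decide (σ.SameCycle y₀ z)
  have hf : ∀ y, f (σ y) = f y := by
    intro y
    simp only [f, Perm.sameCycle_apply_right]
  obtain ⟨r, hr, hr0, hr1, hfr, hrc⟩ := exists_partial_refl σ (orderOf σ) (odd_order σ hodd)
    (pow_orderOf_eq_one σ) f hf
  have hrr : ∀ y, r (r y) = y := fun y => congrArg (fun φ : Perm Y => φ y) hr
  have hr1' : ∀ y, f y = true → r (σ⁻¹ y) = σ (r y) := by
    intro y hy
    have h1 : f (σ⁻¹ y) = true := by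
      have := hf (σ⁻¹ y)
      rw [← this]; simpa using hy
    have := hr1 (σ⁻¹ y) h1
    rw [Perm.eq_inv_iff_eq] at this
    rw [← this]; simp
  have hff : ∀ y, f (σ⁻¹ y) = f y := by
    intro y
    have := hf (σ⁻¹ y)
    rw [← this]; simp
  have hffs : ∀ y, f (σ.symm y) = f y := hff
  have hr1s : ∀ y, f y = true → r (σ.symm y) = σ (r y) := hr1'
  let F : Y × Bool → Y × Bool := fun q => (r q.1, xor q.2 (f q.1))
  have hF : ∀ q, F (F q) = q := by
    rintro ⟨y, s⟩
    simp [F, hrr, hfr]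
  have hs := h (p.permCongr ⟨F, F, hF, hF⟩) r ?_ ?_ ?_
  · rw [sign_invol r hr] at hs
    have hsupp : r.support = Finset.univ.filter fun z => σ.SameCycle y₀ z ∧ r z ≠ z := by
      ext z
      simp only [Perm.mem_support, Finset.mem_filter, Finset.mem_univ, true_and]
      refine ⟨fun hz => ⟨?_, hz⟩, fun hz => hz.2⟩
      by_contra hns
      apply hz
      apply hr0
      simp [f, hns]
    have h1 := hrc y₀ (by simp [f, Perm.SameCycle.refl])
    rw [hy₀, ← hsupp] at h1
    have ho := hodd c hcc
    have he : Even (r.support.card / 2) := by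
      by_contra hne
      rw [Nat.not_even_iff_odd] at hne
      rw [hne.neg_one_pow] at hs
      exact absurd hs (by decide)
    obtain ⟨m, hm⟩ := he
    obtain ⟨l, hl⟩ := ho
    omega
  · intro z
    obtain ⟨⟨y, s⟩, rfl⟩ := p.surjective z
    simp [M.pa, F]
  · intro z
    obtain ⟨⟨y, s⟩, rfl⟩ := p.surjective z
    cases s <;> cases hy : f y <;> 
      simp [M.pb0, M.pb1, F, hf, hffs, hy, hr0, hr1, hr1s]
  · intro z
    obtain ⟨⟨y, s⟩, rfl⟩ := p.surjective z
    simp [M.pblk, F]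

theorem even_of_good {X Y : Type} [Fintype Y] [DecidableEq Y] {a b : Perm X} {blk : X → Y}
    {p : Y × Bool ≃ X} {σ : Perm Y} (M : Model a b blk p σ) (hg : Good σ)
    (x : Perm X) (τ : Perm Y) (hxa : ∀ z, x (a z) = a (x z)) (hxb : ∀ z, x (b z) = b (x z))
    (hxτ : ∀ z, blk (x z) = τ (blk z)) : Perm.sign τ = 1 := by
  classical
  obtain ⟨h4, hcard, hcount⟩ := hg
  have hodd : ∀ c ∈ σ.cycleType, Odd c := by
    intro c hc
    have := h4 c hc
    exact Nat.odd_iff.2 (by omega)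
  have hcen := Perm.centralizer_le_alternating_iff.2 ⟨hodd, hcard, hcount⟩
  let f : Y → Bool := fun y => (p.symm (x (p (y, false)))).2
  have hx0 : ∀ y, x (p (y, false)) = p (τ y, f y) := by
    intro y
    have h1 : x (p (y, false)) = p (p.symm (x (p (y, false)))) := by simp
    have h2 : (p.symm (x (p (y, false)))).1 = τ y := by
      have h3 := hxτ (p (y, false))
      rw [h1, ← Prod.mk.eta (p := p.symm (x (p (y, false)))), M.pblk, M.pblk] at h3
      exact h3
    rw [h1]
    congr 1
    exact Prod.ext h2 rfl
  have hx1 : ∀ y, x (p (y, true)) = p (τ y, !f y) := by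
    intro y
    have := hxa (p (y, false))
    rw [M.pa, hx0, M.pa] at this
    exact this
  have hrel : ∀ y, (f (σ y) = f y) ∧ (f y = false → τ (σ y) = σ (τ y)) ∧
      (f y = true → τ (σ y) = σ⁻¹ (τ y)) := by
    intro y
    have h1 := hxb (p (y, false))
    rw [M.pb0, hx1, hx0] at h1
    cases hy : f y
    · rw [hy, M.pb0] at h1
      have h2 := p.injective h1
      simp only [Prod.mk.injEq] at h2
      refine ⟨?_, fun _ => h2.1, by simp⟩
      simpa using h2.2
    · rw [hy, M.pb1] at h1
      have h2 := p.injective h1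
      simp only [Prod.mk.injEq] at h2
      refine ⟨?_, by simp, fun _ => h2.1⟩
      simpa using h2.2
  have hf : ∀ y, f (σ y) = f y := fun y => (hrel y).1
  obtain ⟨r, hr, hr0, hr1, hfr, hrc⟩ := exists_partial_refl σ (orderOf σ) (odd_order σ hodd)
    (pow_orderOf_eq_one σ) f hf
  have hmem : τ * r ∈ Subgroup.centralizer {σ} := by
    rw [Subgroup.mem_centralizer_singleton_iff]
    ext y
    change τ (r (σ y)) = σ (τ (r y))
    cases hy : f y
    · rw [hr0 y hy, hr0 (σ y) (by rw [hf, hy]), (hrel y).2.1 hy]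
    · rw [hr1 y hy]
      have h1 : σ (σ⁻¹ (r y)) = r y := by simp
      have h2 : f (σ⁻¹ (r y)) = true := by
        rw [← hf, h1, hfr, hy]
      have h3 := (hrel (σ⁻¹ (r y))).2.2 h2
      rw [h1, Perm.eq_inv_iff_eq] at h3
      exact h3.symm
  have hs := hcen hmem
  rw [Perm.mem_alternatingGroup, Perm.sign_mul] at hs
  have hclass : ∀ y, (Finset.univ.filter fun z => σ.SameCycle y z).card % 4 = 1 := by
    intro y
    by_cases h : σ y = y
    · rw [(class_card σ y).1 h]
    · exact h4 _ ((class_card σ y).2 h)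
  have h4s : 4 ∣ r.support.card := by
    let S := Perm.SameCycle.setoid σ
    have : Fintype (Quotient S) := Fintype.ofFinite _
    rw [Finset.card_eq_sum_card_fiberwise (f := fun y => (Quotient.mk S y)) (t := Finset.univ)
      (fun _ _ => Finset.mem_coe.2 (Finset.mem_univ _))]
    apply Finset.dvd_sum
    intro q _
    obtain ⟨y, rfl⟩ := Quotient.exists_rep q
    have hset : (r.support.filter fun z => Quotient.mk S z = Quotient.mk S y) =
        Finset.univ.filter fun z => σ.SameCycle y z ∧ r z ≠ z := by
      ext z
      simp only [Finset.mem_filter, Perm.mem_support, Finset.mem_univ, true_and]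
      constructor
      · rintro ⟨h1, h2⟩
        exact ⟨Perm.SameCycle.symm (Quotient.exact (s := S) h2), h1⟩
      · rintro ⟨h1, h2⟩
        exact ⟨h2, Quotient.sound (s := S) (Perm.SameCycle.symm h1)⟩
    rw [hset]
    cases hy : f y
    · rw [Finset.filter_false_of_mem]
      · simp
      · rintro z - ⟨h1, h2⟩
        apply h2
        apply hr0
        rw [sameCycle_color hf h1, hy]
    · have h1 := hrc y hy
      have h2 := hclass y
      omega
  have hsr : Perm.sign r = 1 := by
    rw [sign_invol r hr]
    obtain ⟨m, hm⟩ := h4s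
    rw [hm]
    apply Even.neg_one_pow
    exact ⟨m, by omega⟩
  rwa [hsr, mul_one] at hs

theorem good_iff_seq (k : ℕ) (hk : 2 ≤ k) : (∃ σ : Perm (Fin k), Good σ) ↔
    ∃ (s : ℕ) (b : Fin s → ℕ), 0 < s ∧ StrictAnti b ∧ (∀ i, 0 < b i) ∧
        (k = 4 * (∑ i, b i) + s ∨ k = 4 * (∑ i, b i) + s + 1) := by
  constructor
  · rintro ⟨σ, h4, hcard, hcount⟩
    rw [Fintype.card_fin] at hcard
    have hle : σ.cycleType.sum ≤ k := by
      have := Perm.sum_cycleType_le σ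
      rwa [Fintype.card_fin] at this
    have hnd : σ.cycleType.Nodup := Multiset.nodup_iff_count_le_one.2 hcount
    let T : Finset ℕ := ⟨σ.cycleType, hnd⟩
    have hT : ∀ c, c ∈ T ↔ c ∈ σ.cycleType := fun c => Iff.rfl
    have hinj : Set.InjOn (fun c => c / 4) (T : Set ℕ) := by
      intro c hc d hd hcd
      have h1 := h4 c hc
      have h2 := h4 d hd
      simp only at hcd
      omega
    let S : Finset ℕ := T.image (fun c => c / 4)
    have hsum : σ.cycleType.sum = 4 * (∑ n ∈ S, n) + S.card := by
      have h1 : σ.cycleType.sum = ∑ c ∈ T, c := by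
        have := Finset.sum_val T
        exact this
      rw [h1, Finset.sum_image hinj, Finset.card_image_of_injOn hinj, Finset.mul_sum,
        Finset.card_eq_sum_ones, ← Finset.sum_add_distrib]
      refine Finset.sum_congr rfl fun c hc => ?_
      have := h4 c hc
      omega
    let b : Fin S.card → ℕ := fun i => S.orderEmbOfFin rfl i.rev
    have hb : ∑ i, b i = ∑ n ∈ S, n := by
      have h1 : ∑ i, b i = ∑ i, S.orderEmbOfFin rfl i :=
        Fintype.sum_equiv Fin.revPerm _ _ (fun i => rfl)
      have h2 := Finset.map_orderEmbOfFin_univ S rfl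
      rw [h1]
      conv_rhs => rw [← h2, Finset.sum_map]
      rfl
    refine ⟨S.card, b, ?_, ?_, ?_, ?_⟩
    · by_contra h0
      have h1 : S.card = 0 := by omega
      have h2 := hsum
      rw [h1, Finset.card_eq_zero.1 h1] at h2
      simp only [Finset.sum_empty] at h2
      omega
    · intro i j hij
      simp only [b]
      exact (S.orderEmbOfFin rfl).strictMono (Fin.rev_lt_rev.2 hij)
    · intro i
      have h1 : b i ∈ S := Finset.orderEmbOfFin_mem S rfl _
      obtain ⟨c, hc, hc'⟩ := Finset.mem_image.1 h1
      have h2 := h4 c hc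
      have h3 := Perm.two_le_of_mem_cycleType ((hT c).1 hc)
      omega
    · rw [hb]
      omega
  · rintro ⟨s, b, hs, hanti, hpos, hkk⟩
    let m : Multiset ℕ := (Finset.univ : Finset (Fin s)).val.map (fun i => 4 * b i + 1)
    have hm : m.sum = 4 * (∑ i, b i) + s := by
      change ∑ i, (4 * b i + 1) = _
      rw [Finset.sum_add_distrib, ← Finset.mul_sum]
      simp
    have hmem : ∀ c ∈ m, ∃ i, 4 * b i + 1 = c := by
      intro c hc
      obtain ⟨i, -, hi⟩ := Multiset.mem_map.1 hc
      exact ⟨i, hi⟩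
    have hex := (Perm.exists_with_cycleType_iff (Fin k) (m := m)).2 ⟨by
      rw [Fintype.card_fin]; omega, by
      intro c hc
      obtain ⟨i, rfl⟩ := hmem c hc
      have := hpos i
      omega⟩
    obtain ⟨σ, hσ⟩ := hex
    refine ⟨σ, ?_, ?_, ?_⟩
    · intro c hc
      rw [hσ] at hc
      obtain ⟨i, rfl⟩ := hmem c hc
      omega
    · rw [hσ, Fintype.card_fin]
      omega
    · rw [hσ, ← Multiset.nodup_iff_count_le_one]
      refine Multiset.Nodup.map ?_ Finset.univ.nodup
      intro i j hij
      apply hanti.injective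
      simp only at hij
      omega

theorem ind_comm {X Y : Type} {a : Perm X} {blk : X → Y} (ha' : ∀ x, a x ≠ x)
    (h1 : ∀ x, blk (a x) = blk x) (h2 : ∀ x z, blk x = blk z → z = x ∨ z = a x)
    {x : Perm X} {τ : Perm Y} (h : ∀ z, blk (x z) = τ (blk z)) (z : X) : x (a z) = a (x z) := by
  have h3 : blk (x z) = blk (x (a z)) := by rw [h, h, h1]
  rcases h2 _ _ h3 with h4 | h4
  · exact absurd (x.injective h4) (ha' z)
  · exact h4

theorem comm_ind {X Y : Type} {a : Perm X} {blk : X → Y}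
    (h1 : ∀ x, blk (a x) = blk x) (h2 : ∀ x z, blk x = blk z → z = x ∨ z = a x)
    (h3 : Function.Surjective blk)
    (x : Perm X) (h : ∀ z, x (a z) = a (x z)) : ∃ τ : Perm Y, ∀ z, blk (x z) = τ (blk z) := by
  have hx : ∀ (x : Perm X), (∀ z, x (a z) = a (x z)) → ∀ z w, blk z = blk w →
      blk (x z) = blk (x w) := by
    intro x h z w hzw
    rcases h2 _ _ hzw with rfl | rfl
    · rfl
    · rw [h, h1]
  have h' : ∀ z, x⁻¹ (a z) = a (x⁻¹ z) := by
    intro z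
    rw [Perm.inv_eq_iff_eq, h]
    simp
  choose s hs using h3
  refine ⟨⟨fun y => blk (x (s y)), fun y => blk (x⁻¹ (s y)), ?_, ?_⟩, ?_⟩
  · intro y
    have := hx x⁻¹ h' (s (blk (x (s y)))) (x (s y)) (hs _)
    simp only
    rw [this]
    simp [hs]
  · intro y
    have := hx x h (s (blk (x⁻¹ (s y)))) (x⁻¹ (s y)) (hs _)
    simp only
    rw [this]
    simp [hs]
  · intro z
    exact hx x h z (s (blk z)) (hs _).symm

/-- pairs of a permutation and its induced permutation of blocks -/
def pairGroup {X Y : Type} (blk : X → Y) : Subgroup (Perm X × Perm Y) where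
  carrier := {l | ∀ z, blk (l.1 z) = l.2 (blk z)}
  one_mem' := by intro z; rfl
  mul_mem' := by
    intro l m hl hm z
    change blk (l.1 (m.1 z)) = l.2 (m.2 (blk z))
    rw [hl, hm]
  inv_mem' := by
    intro l hl z
    change blk (l.1⁻¹ z) = l.2⁻¹ (blk z)
    rw [Perm.eq_inv_iff_eq, ← hl]
    simp

theorem gelfand_sign {G L : Type} [Group G] [Group L] (i : L →* G) (χ : L →* ℤˣ)
    (h1 : ∀ g, ∃ l, g⁻¹ = i l * g * i l)
    (h2 : ∀ g, ∃ l l', i l * g = g * i l' ∧ χ l = -1) (g : G) :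
    ∃ l l', χ l = 1 ∧ χ l' = 1 ∧ g⁻¹ = i l * g * i l' := by
  obtain ⟨k, hk⟩ := h1 g
  rcases Int.units_eq_one_or (χ k) with hc | hc
  · exact ⟨k, k, hc, hc, hk⟩
  obtain ⟨x, y, hxy, hx⟩ := h2 g
  have e1 : i x * g * (i y)⁻¹ = g := by rw [hxy]; group
  rcases Int.units_eq_one_or (χ y) with hy | hy
  · obtain ⟨x', y', hxy', hx'⟩ := h2 g⁻¹
    have e2 : i y' * g * (i x')⁻¹ = g := by
      have : i x' = g⁻¹ * i y' * g := by rw [← hxy']; group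
      rw [this]; group
    rcases Int.units_eq_one_or (χ y') with hy' | hy'
    · refine ⟨k * x * y', x'⁻¹ * y⁻¹ * k, by simp [hc, hx, hy'], by simp [hc, hy, hx'], ?_⟩
      have : i (k * x * y') * g * i (x'⁻¹ * y⁻¹ * k) =
        i k * (i x * (i y' * g * (i x')⁻¹) * (i y)⁻¹) * i k := by
        simp only [map_mul, map_inv, mul_assoc]
      rw [this, e2, e1, hk]
    · refine ⟨k * y', x'⁻¹ * k, by simp [hc, hy'], by simp [hc, hx'], ?_⟩
      have : i (k * y') * g * i (x'⁻¹ * k) = i k * (i y' * g * (i x')⁻¹) * i k := by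
        simp only [map_mul, map_inv, mul_assoc]
      rw [this, e2, hk]
  · refine ⟨k * x, y⁻¹ * k, by simp [hc, hx], by simp [hc, hy], ?_⟩
    have : i (k * x) * g * i (y⁻¹ * k) = i k * (i x * g * (i y)⁻¹) * i k := by
      simp only [map_mul, map_inv, mul_assoc]
    rw [this, e1, hk]

theorem abstract_main {X Y : Type} [Finite X] [Fintype Y] [DecidableEq Y] [Nontrivial Y]
    (a : Perm X) (ha : ∀ x, a (a x) = x) (ha' : ∀ x, a x ≠ x) (blk : X → Y)
    (h1 : ∀ x, blk (a x) = blk x) (h2 : ∀ x z, blk x = blk z → z = x ∨ z = a x)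
    (h3 : Function.Surjective blk) (H : Subgroup (Perm X))
    (hH : ∀ g, g ∈ H ↔ ∃ τ : Perm Y, (∀ z, blk (g z) = τ (blk z)) ∧ Perm.sign τ = 1) :
    IsMultFree H ↔ ¬ ∃ σ : Perm Y, Good σ := by
  classical
  let L := pairGroup blk
  let i : L →* Perm X := (MonoidHom.fst _ _).comp L.subtype
  let χ : L →* ℤˣ := (Perm.sign.comp (MonoidHom.snd _ _)).comp L.subtype
  have hmod : ∀ g : Perm X, ∃ p σ, Model a (g * a * g⁻¹) blk p σ := by
    intro g
    apply exists_model a (g * a * g⁻¹) ha _ ha' _ blk h1 h2 h3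
    · intro x
      simp [ha]
    · intro x hx
      apply ha' (g⁻¹ x)
      apply g.injective
      simpa using hx
  have hLa : ∀ (l : L) z, i l (a z) = a (i l z) := fun l z => ind_comm ha' h1 h2 l.2 z
  have hLa' : ∀ (l : L), i l * a = a * i l := fun l => Equiv.ext (hLa l)
  constructor
  · rintro hmf ⟨σ, hσ⟩
    obtain ⟨p, σ₀, M₀⟩ := hmod 1
    let u : Perm (Y × Bool) :=
      { toFun := fun q => if q.2 then (σ q.1, true) else (q.1, false)
        invFun := fun q => if q.2 then (σ⁻¹ q.1, true) else (q.1, false)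
        left_inv := by rintro ⟨y, s⟩; cases s <;> simp
        right_inv := by rintro ⟨y, s⟩; cases s <;> simp }
    let g : Perm X := p.permCongr u
    have hg0 : ∀ y, g (p (y, false)) = p (y, false) := by
      intro y; simp [g, u]
    have hg1 : ∀ y, g (p (y, true)) = p (σ y, true) := by
      intro y; simp [g, u]
    have M : Model a (g * a * g⁻¹) blk p σ := by
      refine ⟨M₀.pa, ?_, ?_, M₀.pblk⟩
      · intro y
        have e : g⁻¹ (p (y, false)) = p (y, false) := by
          rw [Perm.inv_eq_iff_eq, hg0]
        rw [Perm.mul_apply, Perm.mul_apply, e, M₀.pa, Bool.not_false, hg1]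
      · intro y
        have e : g⁻¹ (p (y, true)) = p (σ⁻¹ y, true) := by
          rw [Perm.inv_eq_iff_eq, hg1]
          simp
        rw [Perm.mul_apply, Perm.mul_apply, e, M₀.pa, Bool.not_true, hg0]
    obtain ⟨y₀, y₁, hy⟩ := exists_pair_ne Y
    let t : L := ⟨(p.permCongr ((swap y₀ y₁).prodCongr (Equiv.refl Bool)), swap y₀ y₁), by
      intro z
      obtain ⟨⟨y, s⟩, rfl⟩ := p.surjective z
      simp [M.pblk]⟩
    refine not_multFree i χ t (Perm.sign_swap hy) H ?_ g ?_ hmf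
    · intro h hh
      obtain ⟨τ, hτ, hs⟩ := (hH h).1 hh
      exact ⟨⟨(h, τ), hτ⟩, rfl, hs⟩
    · intro l l' hl
      refine even_of_good M hσ (i l) l.1.2 (hLa l) ?_ l.2
      have e1 : i l * (g * a * g⁻¹) = (g * a * g⁻¹) * i l := by
        have e2 : i l = g * (i l')⁻¹ * g⁻¹ := by
          nth_rewrite 1 [← hl]; group
        have e3 : (i l')⁻¹ * a = a * (i l')⁻¹ := by
          have := hLa' l'⁻¹
          rwa [map_inv] at this
        calc i l * (g * a * g⁻¹) = g * ((i l')⁻¹ * a) * g⁻¹ := by rw [e2]; group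
          _ = (g * a * g⁻¹) * i l := by rw [e3, e2]; group
      intro z
      exact congrArg (fun φ : Perm X => φ z) e1
  · intro hno
    apply multFree_of_symm
    have key := gelfand_sign i χ ?_ ?_
    · intro g
      obtain ⟨l, l', hl, hl', hg⟩ := key g
      exact ⟨i l, (hH _).2 ⟨l.1.2, l.2, hl⟩, i l', (hH _).2 ⟨l'.1.2, l'.2, hl'⟩, hg⟩
    · intro g
      obtain ⟨p, σ, M⟩ := hmod g
      obtain ⟨x, hx, hxa⟩ := model_invol M
      have hx2 : x * x = 1 := Equiv.ext hx
      have hxa2 : x * a = (g * a * g⁻¹) * x := Equiv.ext hxa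
      have hc : ∀ z, (g⁻¹ * x) (a z) = a ((g⁻¹ * x) z) := by
        intro z
        have : (g⁻¹ * x) * a = a * (g⁻¹ * x) := by
          rw [mul_assoc, hxa2]; group
        exact congrArg (fun φ : Perm X => φ z) this
      obtain ⟨τ, hτ⟩ := comm_ind h1 h2 h3 _ hc
      refine ⟨⟨(g⁻¹ * x, τ), hτ⟩, ?_⟩
      change g⁻¹ = (g⁻¹ * x) * g * (g⁻¹ * x)
      have : (g⁻¹ * x) * g * (g⁻¹ * x) = g⁻¹ * (x * x) := by group
      rw [this, hx2, mul_one]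
    · intro g
      obtain ⟨p, σ, M⟩ := hmod g
      have hng : ¬ Good σ := fun h => hno ⟨σ, h⟩
      have hex := mt (good_of_even M) hng
      push Not at hex
      obtain ⟨x, τ, hxa, hxb, hxτ, hs⟩ := hex
      have hxb2 : x * (g * a * g⁻¹) = (g * a * g⁻¹) * x := Equiv.ext hxb
      have hc : ∀ z, (g⁻¹ * x * g) (a z) = a ((g⁻¹ * x * g) z) := by
        intro z
        have : (g⁻¹ * x * g) * a = a * (g⁻¹ * x * g) := by
          calc (g⁻¹ * x * g) * a = g⁻¹ * (x * (g * a * g⁻¹)) * g := by group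
            _ = a * (g⁻¹ * x * g) := by rw [hxb2]; group
        exact congrArg (fun φ : Perm X => φ z) this
      obtain ⟨τ', hτ'⟩ := comm_ind h1 h2 h3 _ hc
      refine ⟨⟨(x, τ), hxτ⟩, ⟨(g⁻¹ * x * g, τ'), hτ'⟩, ?_, ?_⟩
      · change x * g = g * (g⁻¹ * x * g)
        group
      · exact (Int.units_eq_one_or (Perm.sign τ)).resolve_left hs

end CombPart

theorem stmt11 (k : ℕ) (hk : 2 ≤ k)
    -- `H = S_2 ≀ A_k`: the permutations mapping pairs to pairs whose induced
    -- permutation of the `k` pairs is even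
    (H : Subgroup (Equiv.Perm (Fin (2 * k))))
    (hH : ∀ g : Equiv.Perm (Fin (2 * k)), g ∈ H ↔
      ∃ σ : Equiv.Perm (Fin k), InducedPairPerm g σ ∧ Equiv.Perm.sign σ = 1) :
    IsMultFree H ↔
      ¬ ∃ (s : ℕ) (b : Fin s → ℕ), 0 < s ∧ StrictAnti b ∧ (∀ i, 0 < b i) ∧
        (k = 4 * (∑ i, b i) + s ∨ k = 4 * (∑ i, b i) + s + 1) := by
  have hnt : Nontrivial (Fin k) := Fin.nontrivial_iff_two_le.2 hk
  let a0 : Fin (2 * k) → Fin (2 * k) := fun i =>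
    if h : (i : ℕ) % 2 = 0 then ⟨(i : ℕ) + 1, by have := i.isLt; omega⟩
    else ⟨(i : ℕ) - 1, by have := i.isLt; omega⟩
  have ha0 : ∀ i, ((a0 i : Fin (2 * k)) : ℕ) = if (i : ℕ) % 2 = 0 then (i : ℕ) + 1 else (i : ℕ) - 1 := by
    intro i
    simp only [a0]
    split_ifs <;> rfl
  have haa : ∀ i, a0 (a0 i) = i := by
    intro i
    apply Fin.ext
    rw [ha0, ha0]
    split_ifs <;> omega
  let a : Equiv.Perm (Fin (2 * k)) := ⟨a0, a0, haa, haa⟩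
  let blk : Fin (2 * k) → Fin k := fun i => ⟨(i : ℕ) / 2, by have := i.isLt; omega⟩
  rw [← good_iff_seq k hk]
  refine abstract_main a haa ?_ blk ?_ ?_ ?_ H ?_
  · intro x hx
    have h1 : ((a0 x : Fin (2 * k)) : ℕ) = x := congrArg Fin.val hx
    rw [ha0] at h1
    split_ifs at h1 <;> omega
  · intro x
    apply Fin.ext
    change ((a0 x : Fin (2 * k)) : ℕ) / 2 = (x : ℕ) / 2
    rw [ha0]
    split_ifs <;> omega
  · intro x z hxz
    have h1 : (x : ℕ) / 2 = (z : ℕ) / 2 := congrArg Fin.val hxz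
    by_cases h : z = x
    · exact Or.inl h
    · right
      have h2 : (z : ℕ) ≠ x := fun h' => h (Fin.ext h')
      apply Fin.ext
      change (z : ℕ) = (a0 x : Fin (2 * k))
      rw [ha0]
      split_ifs <;> omega
  · intro y
    refine ⟨⟨2 * (y : ℕ), by have := y.isLt; omega⟩, ?_⟩
    apply Fin.ext
    change 2 * (y : ℕ) / 2 = y
    omega
  · intro g
    rw [hH]
    constructor
    · rintro ⟨σ, h, hs⟩
      exact ⟨σ, fun z => Fin.ext (h z), hs⟩
    · rintro ⟨σ, h, hs⟩
      exact ⟨σ, fun z => congrArg Fin.val (h z), hs⟩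
end

section
/- Let S_2≀S_k ≤ S_{2k} be the subgroup of permutations mapping each pair {2i−1,2i} (1 ≤ i ≤ k) to some pair {2j−1,2j}, and let S_2≀A_k be its subgroup of elements whose induced permutation of the k pairs is even. Then: (i) for every k ≥ 25, the permutation character of S_{2k} on the cosets of S_2≀A_k is not multiplicity-free; (ii) for k = 24, the permutation character of S_{48} on the cosets of S_2≀A_{24} IS multiplicity-free. -/
section RepTheory

open CategoryTheory

variable {G : Type} [Group G]

lemma hecke_left {R : Type*} [Ring R] (f : G →* R) (H : Subgroup G) [Fintype H] (h : G)
    (hh : h ∈ H) : f h * (∑ x : H, f x) = ∑ x : H, f x := by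
  rw [Finset.mul_sum]
  refine Fintype.sum_equiv (Equiv.mulLeft (⟨h, hh⟩ : H)) _ _ ?_
  intro x; simp

lemma hecke_right {R : Type*} [Ring R] (f : G →* R) (H : Subgroup G) [Fintype H] (h : G)
    (hh : h ∈ H) : (∑ x : H, f x) * f h = ∑ x : H, f x := by
  rw [Finset.sum_mul]
  refine Fintype.sum_equiv (Equiv.mulRight (⟨h, hh⟩ : H)) _ _ ?_
  intro x; simp

lemma hecke_inv {R : Type*} [Ring R] (f : G →* R) (H : Subgroup G) [Fintype H]
    (hs : ∀ g : G, ∃ a ∈ H, ∃ b ∈ H, g⁻¹ = a * g * b) (g : G) :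
    (∑ x : H, f x) * f g⁻¹ * (∑ x : H, f x) = (∑ x : H, f x) * f g * (∑ x : H, f x) := by
  obtain ⟨a, ha, b, hb, h⟩ := hs g
  rw [h, map_mul, map_mul, ← mul_assoc, ← mul_assoc, hecke_right f H a ha, mul_assoc,
    hecke_left f H b hb]

lemma hecke_comm_s12 {R : Type*} [Ring R] (f : G →* R) (H : Subgroup G) [Fintype H]
    (hs : ∀ g : G, ∃ a ∈ H, ∃ b ∈ H, g⁻¹ = a * g * b) (g g' : G) :
    (∑ x : H, f x) * f g * (∑ x : H, f x) * f g' * (∑ x : H, f x) =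
    (∑ x : H, f x) * f g' * (∑ x : H, f x) * f g * (∑ x : H, f x) := by
  have key : ∀ a b : G, (∑ x : H, f x) * f a * (∑ x : H, f x) * f b * (∑ x : H, f x) =
      ∑ y : H, (∑ x : H, f x) * f (a * y * b) * (∑ x : H, f x) := by
    intro a b
    generalize hE : (∑ x : H, f x) = E
    calc E * f a * E * f b * E = E * f a * (∑ x : H, f x) * f b * E := by rw [hE]
      _ = _ := by
        simp only [Finset.mul_sum, Finset.sum_mul, map_mul, mul_assoc]
  calc _ = ∑ y : H, (∑ x : H, f x) * f (g * y * g') * (∑ x : H, f x) := key _ _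
    _ = ∑ y : H, (∑ x : H, f x) * f (g'⁻¹ * y * g⁻¹) * (∑ x : H, f x) := by
      refine Fintype.sum_equiv (Equiv.inv H) _ _ ?_
      intro y
      rw [← hecke_inv f H hs]
      simp [mul_assoc]
    _ = (∑ x : H, f x) * f g'⁻¹ * (∑ x : H, f x) * f g⁻¹ * (∑ x : H, f x) := (key _ _).symm
    _ = _ := by
      rw [hecke_inv f H hs g', mul_assoc, mul_assoc, mul_assoc, ← mul_assoc _ (f g⁻¹),
        hecke_inv f H hs g]
      simp only [mul_assoc]

/-- core Gelfand argument -/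
lemma gelfand_core {V : Type*} [AddCommGroup V] [Module ℂ V] [FiniteDimensional ℂ V]
    (ρ : Representation ℂ G V) (H : Subgroup G) [Finite H]
    (hirr : ∀ W : Submodule ℂ V, (∀ g : G, ∀ w ∈ W, ρ g w ∈ W) → W = ⊥ ∨ W = ⊤)
    (hs : ∀ g : G, ∃ a ∈ H, ∃ b ∈ H, g⁻¹ = a * g * b) :
    Module.finrank ℂ (Representation.invariants (ρ.comp H.subtype)) ≤ 1 := by
  classical
  have := Fintype.ofFinite H
  set I := Representation.invariants (ρ.comp H.subtype) with hI
  have memI : ∀ v, v ∈ I ↔ ∀ h ∈ H, ρ h v = v := by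
    intro v
    rw [hI, Representation.mem_invariants]
    exact ⟨fun h x hx => h ⟨x, hx⟩, fun h x => h x.1 x.2⟩
  set P : V →ₗ[ℂ] V := ∑ x : H, ρ x with hP
  set N : ℂ := (Fintype.card H : ℂ) with hN
  have hN0 : N ≠ 0 := by simp [hN]
  have PI : ∀ v, P v ∈ I := by
    intro v
    rw [memI]
    intro h hh
    have := hecke_left ρ H h hh
    exact LinearMap.congr_fun this v
  have Pid : ∀ v ∈ I, P v = N • v := by
    intro v hv
    rw [memI] at hv
    rw [hP, LinearMap.sum_apply, Finset.sum_congr rfl (fun x _ => hv x.1 x.2)]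
    simp [hN, Nat.cast_smul_eq_nsmul]
  have comm : ∀ g g' v, P (ρ g (P (ρ g' (P v)))) = P (ρ g' (P (ρ g (P v)))) := by
    intro g g' v
    have := hecke_comm_s12 ρ H hs g g'
    exact LinearMap.congr_fun this v
  have comm' : ∀ g g', ∀ v ∈ I, P (ρ g (P (ρ g' v))) = P (ρ g' (P (ρ g v))) := by
    intro g g' v hv
    have := comm g g' v
    rw [Pid v hv] at this
    simp only [map_smul] at this
    exact smul_right_injective _ hN0 this
  -- generation
  have gen : ∀ W : Submodule ℂ V, W ≠ ⊥ → W ≤ I → (∀ g, ∀ w ∈ W, P (ρ g w) ∈ W) → I ≤ W := by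
    intro W hW hWI hst
    have htop : (Submodule.span ℂ {v | ∃ g : G, ∃ w ∈ W, v = ρ g w}) = ⊤ := by
      refine (hirr _ ?_).resolve_left ?_
      · intro g w hw
        refine Submodule.span_induction (p := fun w _ => ρ g w ∈ _) ?_ ?_ ?_ ?_ hw
        · rintro x ⟨g', w, hw, rfl⟩
          refine Submodule.subset_span ⟨g * g', w, hw, ?_⟩
          simp
        · simp
        · intro x y _ _ hx hy
          rw [map_add]; exact Submodule.add_mem _ hx hy
        · intro a x _ hx
          rw [map_smul]; exact Submodule.smul_mem _ _ hx
      · intro h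
        apply hW
        rw [eq_bot_iff, ← h]
        intro w hw
        exact Submodule.subset_span ⟨1, w, hw, by simp⟩
    intro v hv
    have h1 : ∀ v ∈ Submodule.span ℂ {v | ∃ g : G, ∃ w ∈ W, v = ρ g w}, P v ∈ W := by
      intro v hv
      refine Submodule.span_induction (p := fun w _ => P w ∈ W) ?_ ?_ ?_ ?_ hv
      · rintro x ⟨g', w, hw, rfl⟩
        exact hst g' w hw
      · simp
      · intro x y _ _ hx hy
        rw [map_add]; exact Submodule.add_mem _ hx hy
      · intro a x _ hx
        rw [map_smul]; exact Submodule.smul_mem _ _ hx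
    have h2 := h1 v (by rw [htop]; trivial)
    rw [Pid v hv] at h2
    have := W.smul_mem N⁻¹ h2
    rwa [smul_smul, inv_mul_cancel₀ hN0, one_smul] at this
  have scal : ∀ g, I ≠ ⊥ → ∃ μ : ℂ, ∀ v ∈ I, P (ρ g v) = μ • v := by
    intro g hne
    have : Nontrivial I := (Submodule.nontrivial_iff_ne_bot).2 hne
    let T : I →ₗ[ℂ] I := ((P ∘ₗ ρ g).restrict (p := I) (q := I) (fun v _ => PI _))
    obtain ⟨μ, hμ⟩ := Module.End.exists_eigenvalue T
    obtain ⟨v0, hv0⟩ := hμ.exists_hasEigenvector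
    refine ⟨μ, ?_⟩
    let W : Submodule ℂ V := I ⊓ LinearMap.ker (P ∘ₗ ρ g - μ • LinearMap.id)
    have memW : ∀ w, w ∈ W ↔ w ∈ I ∧ P (ρ g w) = μ • w := by
      intro w
      simp [W, sub_eq_zero]
    have hIW : I ≤ W := by
      apply gen
      · intro h
        have h3 : (v0 : V) ∈ W := by
          rw [memW]
          refine ⟨v0.2, ?_⟩
          have := hv0.apply_eq_smul
          exact congrArg Subtype.val this
        rw [h, Submodule.mem_bot] at h3
        exact hv0.2 (Subtype.ext h3)
      · exact inf_le_left
      · intro x w hw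
        rw [memW] at hw ⊢
        refine ⟨PI _, ?_⟩
        rw [comm' g x w hw.1, hw.2]
        simp
    intro v hv
    exact ((memW v).1 (hIW hv)).2
  by_cases hne : I = ⊥
  · rw [hne]; simp
  obtain ⟨v0, hv0, hv00⟩ := (Submodule.ne_bot_iff _).1 hne
  rw [finrank_le_one_iff]
  refine ⟨⟨v0, hv0⟩, ?_⟩
  have h := gen (Submodule.span ℂ {v0}) (by simpa using hv00)
    (by rw [Submodule.span_le]; simpa using hv0) (by
      intro g w hw
      have hwI : w ∈ I := by
        have : Submodule.span ℂ {v0} ≤ I := by rw [Submodule.span_le]; simpa using hv0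
        exact this hw
      obtain ⟨μ, hμ⟩ := scal g hne
      rw [hμ w hwI]
      exact Submodule.smul_mem _ _ hw)
  rintro ⟨w, hw⟩
  obtain ⟨c, hc⟩ := Submodule.mem_span_singleton.1 (h hw)
  exact ⟨c, Subtype.ext hc⟩

lemma simple_sub (V : FDRep ℂ G) (hV : Simple V) (W : Submodule ℂ V)
    (hW : ∀ g : G, ∀ w ∈ W, V.ρ g w ∈ W) : W = ⊥ ∨ W = ⊤ := by
  let ρW : Representation ℂ G W :=
    (Subrepresentation.mk (ρ := V.ρ) W (fun g v hv => hW g v hv)).toRepresentation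
  let i : FDRep.of ρW ⟶ V := 
    ⟨InducedCategory.homMk (ModuleCat.ofHom W.subtype), fun g => by ext; rfl⟩
  have hi : ∀ w : W, i.hom w = (w : V) := fun w => rfl
  have : Mono i := ConcreteCategory.mono_of_injective _ (fun a b h => Subtype.ext h)
  by_cases h0 : i = 0
  · left
    rw [eq_bot_iff]
    intro w hw
    have h1 := hi ⟨w, hw⟩
    rw [h0] at h1
    exact h1.symm
  · right
    have : IsIso i := (Simple.mono_isIso_iff_nonzero i).2 h0
    rw [eq_top_iff]
    intro v _
    have h1 : i.hom ((inv i).hom v) = v := by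
      have : (inv i ≫ i).hom v = v := by rw [IsIso.inv_hom_id]; rfl
      exact this
    rw [← h1]
    exact ((inv i).hom v : W).2

lemma gelfand [Finite G] (H : Subgroup G)
    (hs : ∀ g : G, ∃ a ∈ H, ∃ b ∈ H, g⁻¹ = a * g * b) : IsMultFree H := by
  intro V hV
  exact gelfand_core V.ρ H (simple_sub V hV) hs

end RepTheory

section RepTheory2

open CategoryTheory
open scoped MonoidAlgebra

variable {G : Type} [Group G]

lemma simple_of_irreducible [Finite G] {V : Type} [AddCommGroup V] [Module ℂ V]
    [FiniteDimensional ℂ V] (ρ : Representation ℂ G V) [Nontrivial V]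
    (hirr : ∀ W : Submodule ℂ V, (∀ g : G, ∀ w ∈ W, ρ g w ∈ W) → W = ⊥ ∨ W = ⊤) :
    Simple (FDRep.of ρ) := by
  have : NeZero (Nat.card G : ℂ) := ⟨by simp [Nat.card_pos.ne']⟩
  have hh : ρ.IsIrreducible := by
    have : Nontrivial (Subrepresentation ρ) := by
      refine ⟨⊥, ⊤, fun h => ?_⟩
      have h' := congrArg Subrepresentation.toSubmodule h
      exact bot_ne_top (α := Submodule ℂ V) h'
    refine ⟨fun W => ?_⟩
    rcases hirr W.toSubmodule (fun g w hw => W.apply_mem_toSubmodule g hw) with h | h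
    · left; exact Subrepresentation.toSubmodule_injective h
    · right; exact Subrepresentation.toSubmodule_injective h
  refine (FDRep.simple_iff_end_is_rank_one (FDRep.of ρ)).2 ?_
  rw [← (Representation.linHom.invariantsEquivFDRepHom (FDRep.of ρ) (FDRep.of ρ)).finrank_eq]
  rw [show (Representation.linHom (FDRep.of ρ).ρ (FDRep.of ρ).ρ) = Representation.linHom ρ ρ from rfl]
  rw [(Representation.invariantsEquivIntertwiningMap ρ ρ).finrank_eq]
  exact Representation.IsIrreducible.finrank_intertwiningMap_self ρ

lemma multfree_comm_simple [Finite G] (H : Subgroup G) [Fintype H] (hH : IsMultFree H) (t g : G)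
    (S : Type) [AddCommGroup S] [Module (MonoidAlgebra ℂ G) S]
    (hS' : IsSimpleModule (MonoidAlgebra ℂ G) S) (hSf : Module.Finite (MonoidAlgebra ℂ G) S)
    (E : MonoidAlgebra ℂ G) (hE : E = ∑ x : H, MonoidAlgebra.of ℂ G x) (s : S) :
    (E * MonoidAlgebra.of ℂ G t * E * MonoidAlgebra.of ℂ G g * E) • s =
      (E * MonoidAlgebra.of ℂ G g * E * MonoidAlgebra.of ℂ G t * E) • s := by
  have hfd : FiniteDimensional ℂ (MonoidAlgebra ℂ G) := by infer_instance
  let _ : Module ℂ S := Module.compHom S (algebraMap ℂ (MonoidAlgebra ℂ G))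
  have hsm : ∀ (c : ℂ) (v : S), c • v = algebraMap ℂ (MonoidAlgebra ℂ G) c • v := fun _ _ => rfl
  have : IsScalarTower ℂ (MonoidAlgebra ℂ G) S := ⟨fun c a v => by
    rw [hsm, Algebra.smul_def, mul_smul]⟩
  let ρ := Representation.ofModule' (k := ℂ) (G := G) S
  have hact : ∀ (g : G) (v : S), ρ g v = (MonoidAlgebra.of ℂ G g • v : S) := fun g v => rfl
  have hfin : Module.Finite ℂ S := Module.Finite.trans (MonoidAlgebra ℂ G) _
  have hnt : Nontrivial S := IsSimpleModule.nontrivial (MonoidAlgebra ℂ G) S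
  have hirr : ∀ W : Submodule ℂ S, (∀ g : G, ∀ w ∈ W, ρ g w ∈ W) → W = ⊥ ∨ W = ⊤ := by
    intro W hW
    let W' : Submodule (MonoidAlgebra ℂ G) S :=
      { W with
        smul_mem' := by
          intro c x hx
          induction c using MonoidAlgebra.induction_linear with
          | zero => rw [zero_smul]; exact W.zero_mem
          | add a b ha hb => rw [add_smul]; exact W.add_mem ha hb
          | single g a =>
            have := W.smul_mem a (hW g x hx)
            rw [hact, ← smul_assoc] at this
            simpa using this }
    rcases eq_bot_or_eq_top W' with h | h
    · left
      rw [eq_bot_iff]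
      intro w hw
      have h1 : w ∈ W' := hw
      rw [h] at h1
      simpa using h1
    · right
      rw [eq_top_iff]
      intro w _
      have h1 : w ∈ W' := by rw [h]; trivial
      exact h1
  have h1 := hH (FDRep.of ρ) (simple_of_irreducible ρ hirr)
  rw [FDRep.of_ρ'] at h1
  rw [finrank_le_one_iff] at h1
  obtain ⟨⟨v, hv⟩, hgen⟩ := h1
  have hgen' : ∀ w : S, (∀ h ∈ H, MonoidAlgebra.of ℂ G h • w = w) → ∃ c : ℂ,
      w = c • v := by
    intro w hw
    obtain ⟨c, hc⟩ := hgen ⟨w, (Representation.mem_invariants _ _).2 (fun h => hw h.1 h.2)⟩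
    refine ⟨c, ?_⟩
    have := congrArg Subtype.val hc
    exact this.symm
  generalize hv' : (show S from v) = v' at hgen'
  have hfix : ∀ w : S, ∃ c : ℂ, E • w = c • v' := by
    intro w
    apply hgen'
    intro h hh
    rw [smul_smul, hE, hecke_left _ H h hh]
  obtain ⟨γ, hγ⟩ := hfix s
  obtain ⟨α, hα⟩ := hfix (MonoidAlgebra.of ℂ G t • v')
  obtain ⟨β, hβ⟩ := hfix (MonoidAlgebra.of ℂ G g • v')
  have e1 : (E * MonoidAlgebra.of ℂ G t * E * MonoidAlgebra.of ℂ G g * E) • (s : S) =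
    (E * MonoidAlgebra.of ℂ G g * E * MonoidAlgebra.of ℂ G t * E) • (s : S) := by
    have eα : ∀ c : ℂ, E • MonoidAlgebra.of ℂ G t • (c • v') = (c * α) • v' := by
      intro c
      rw [smul_comm (MonoidAlgebra.of ℂ G t) c, smul_comm E c, hα, smul_smul]
    have eβ : ∀ c : ℂ, E • MonoidAlgebra.of ℂ G g • (c • v') = (c * β) • v' := by
      intro c
      rw [smul_comm (MonoidAlgebra.of ℂ G g) c, smul_comm E c, hβ, smul_smul]
    simp only [mul_smul, hγ]
    rw [eα, eβ, eα, eβ]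
    congr 1
    ring
  exact e1

lemma multfree_comm [Finite G] (H : Subgroup G) [Fintype H] (hH : IsMultFree H) (t g : G) :
    (∑ x : H, MonoidAlgebra.of ℂ G x) * MonoidAlgebra.of ℂ G t * (∑ x : H, MonoidAlgebra.of ℂ G x)
      * MonoidAlgebra.of ℂ G g * (∑ x : H, MonoidAlgebra.of ℂ G x) =
    (∑ x : H, MonoidAlgebra.of ℂ G x) * MonoidAlgebra.of ℂ G g * (∑ x : H, MonoidAlgebra.of ℂ G x)
      * MonoidAlgebra.of ℂ G t * (∑ x : H, MonoidAlgebra.of ℂ G x) := by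
  classical
  have : NeZero (Nat.card G : ℂ) := ⟨by simp [Nat.card_pos.ne']⟩
  have hfd : FiniteDimensional ℂ (MonoidAlgebra ℂ G) := by infer_instance
  set E := (∑ x : H, MonoidAlgebra.of ℂ G x) with hE
  suffices h : ∀ s : MonoidAlgebra ℂ G,
      (E * MonoidAlgebra.of ℂ G t * E * MonoidAlgebra.of ℂ G g * E) • s =
      (E * MonoidAlgebra.of ℂ G g * E * MonoidAlgebra.of ℂ G t * E) • s by
    simpa using h 1
  intro s
  have hs : s ∈ sSup {S : Submodule (MonoidAlgebra ℂ G) (MonoidAlgebra ℂ G) |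
      IsSimpleModule (MonoidAlgebra ℂ G) S} := by
    rw [IsSemisimpleModule.sSup_simples_eq_top]; trivial
  rw [sSup_eq_iSup'] at hs
  refine Submodule.iSup_induction _ (motive := fun s =>
      (E * MonoidAlgebra.of ℂ G t * E * MonoidAlgebra.of ℂ G g * E) • s =
      (E * MonoidAlgebra.of ℂ G g * E * MonoidAlgebra.of ℂ G t * E) • s) hs ?_ ?_ ?_
  · rintro ⟨S, hS⟩ s hs
    have e1 := multfree_comm_simple H hH t g S hS inferInstance E hE ⟨s, hs⟩
    exact congrArg Subtype.val e1
  · simp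
  · intro x y hx hy
    rw [smul_add, smul_add, hx, hy]


lemma not_multfree [Finite G] (H : Subgroup G) (t g : G)
    (ht : ∀ h ∈ H, t⁻¹ * h * t ∈ H) (ht' : ∀ h ∈ H, t * h * t⁻¹ ∈ H)
    (hg : ∀ a ∈ H, ∀ b ∈ H, t * g ≠ a * g * t * b) : ¬ IsMultFree H := by
  classical
  intro hH
  have := Fintype.ofFinite H
  have h := multfree_comm H hH t g
  let φ : MonoidAlgebra ℂ G →ₗ[ℂ] ℂ :=
    Finsupp.lsum ℂ (fun x : G => (if ∃ a ∈ H, ∃ b ∈ H, x = a * g * t * b then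
      (LinearMap.id : ℂ →ₗ[ℂ] ℂ) else 0)) ∘ₗ (MonoidAlgebra.coeffLinearEquiv ℂ).toLinearMap
  have hφ : ∀ x : G, φ (MonoidAlgebra.of ℂ G x) =
      if ∃ a ∈ H, ∃ b ∈ H, x = a * g * t * b then 1 else 0 := by
    intro x
    simp only [φ]
    split_ifs with hx <;> simp [hx]
  have key : ∀ a b : G, (∑ x : H, MonoidAlgebra.of ℂ G x) * MonoidAlgebra.of ℂ G a *
      (∑ x : H, MonoidAlgebra.of ℂ G x) * MonoidAlgebra.of ℂ G b *
      (∑ x : H, MonoidAlgebra.of ℂ G x) =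
      ∑ z : H, ∑ y : H, ∑ x : H, MonoidAlgebra.of ℂ G (x * a * y * b * z) := by
    intro a b
    simp only [Finset.mul_sum, Finset.sum_mul, map_mul]
  rw [key, key] at h
  have h2 := congrArg φ h
  simp only [map_sum, hφ] at h2
  rw [Finset.sum_eq_zero, eq_comm, Finset.sum_congr rfl (g := fun _ => (Fintype.card H : ℂ) *
    (Fintype.card H : ℂ))] at h2
  · simp at h2
  · intro z _
    have : ∀ y x : H, (∃ a ∈ H, ∃ b ∈ H, (x : G) * g * y * t * z = a * g * t * b) := by
      intro y x
      refine ⟨x, x.2, t⁻¹ * y * t * z, H.mul_mem (ht _ y.2) z.2, ?_⟩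
      group
    simp [this]
  · intro z _
    refine Finset.sum_eq_zero fun y _ => Finset.sum_eq_zero fun x _ => ?_
    rw [if_neg]
    rintro ⟨a, ha, b, hb, hab⟩
    refine hg ((x * (t * y * t⁻¹))⁻¹ * a) (H.mul_mem (H.inv_mem (H.mul_mem x.2 (ht' _ y.2))) ha)
      (b * z⁻¹) (H.mul_mem hb (H.inv_mem z.2)) ?_
    have : t * g = (x * (t * y * t⁻¹))⁻¹ * (x * t * y * g * z) * (z : G)⁻¹ := by group
    rw [this, hab]
    simp only [mul_assoc, Subgroup.coe_inv]

end RepTheory2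

section Comb1

open Equiv Equiv.Perm

lemma sign_addLeft_odd {n : ℕ} [NeZero n] (hn : n % 2 = 1) (a : ZMod n) :
    sign (Equiv.addLeft a) = 1 := by
  have h : (Equiv.addLeft a) ^ n = 1 := by
    have : ∀ k : ℕ, (Equiv.addLeft a) ^ k = Equiv.addLeft (k • a) := by
      intro k
      induction k with
      | zero => ext x; simp
      | succ k ih => 
        rw [pow_succ, ih]; ext x
        simp [add_mul]
    rw [this]; ext x; simp
  have h2 := congrArg sign h
  rw [map_pow, map_one] at h2
  rcases Int.units_eq_one_or (sign (Equiv.addLeft a)) with h3 | h3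
  · exact h3
  · rw [h3, Odd.neg_one_pow (Nat.odd_iff.2 hn)] at h2
    exact absurd h2 (by decide)

lemma sign_subLeft_odd {n : ℕ} [NeZero n] (q : ℕ) (hn : n = 2 * q + 1) (a : ZMod n) :
    sign (Equiv.subLeft a) = (-1) ^ q := by
  have h : (Equiv.subLeft a) ^ 2 = 1 := by
    ext x; simp [pow_two]
  rw [sign_of_pow_two_eq_one h]
  have h2 : (2 : ZMod n) * ((q : ZMod n) + 1) = 1 := by
    have : ((n : ℕ) : ZMod n) = 0 := by simp
    rw [hn] at this
    have h3 : (2 * (q : ZMod n) + 1) = 0 := by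
      subst hn
      have : ((2 * q + 1 : ℕ) : ZMod (2 * q + 1)) = 0 := by simp
      push_cast at this
      exact this
    linear_combination h3
  have : Fintype.card (Function.fixedPoints (Equiv.subLeft a)) = 1 := by
    rw [Fintype.card_eq_one_iff]
    refine ⟨⟨((q : ZMod n) + 1) * a, ?_⟩, ?_⟩
    · simp only [Function.mem_fixedPoints, Function.IsFixedPt, Equiv.subLeft_apply]
      linear_combination (-a) * h2
    · rintro ⟨y, hy⟩
      simp only [Function.mem_fixedPoints, Function.IsFixedPt, Equiv.subLeft_apply] at hy
      apply Subtype.ext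
      show y = _
      linear_combination (-y) * h2 - ((q : ZMod n) + 1) * hy
  rw [this, ZMod.card, hn]
  congr 1
  omega

lemma sign_addRight_one {n : ℕ} [NeZero n] (hn : n % 2 = 0) :
    sign (Equiv.addRight (1 : ZMod n)) = -1 := by
  obtain ⟨k, rfl⟩ : ∃ k, n = k + 1 := ⟨n - 1, by have := NeZero.pos n; omega⟩
  have : sign (Equiv.addRight (1 : ZMod (k + 1))) = sign (finRotate (k + 1)) := by
    refine sign_eq_sign_of_equiv _ _ (Equiv.refl (Fin (k+1))) ?_
    intro x
    exact (finRotate_apply (n := k + 1) x).symm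
  rw [this, sign_finRotate, Odd.neg_one_pow]
  rw [Nat.odd_iff]; omega

lemma sign_single {ι : Type*} [Fintype ι] [DecidableEq ι] {B : ι → Type*} [∀ i, Fintype (B i)]
    [∀ i, DecidableEq (B i)] (F : ∀ i, Perm (B i)) (a : ι) (hF : ∀ i, i ≠ a → F i = 1) :
    sign (Equiv.sigmaCongrRight F) = sign (F a) := by
  let f : B a ≃ {y : Σ i, B i // y.1 = a} :=
    { toFun := fun b => ⟨⟨a, b⟩, rfl⟩
      invFun := fun y => y.2 ▸ y.1.2
      left_inv := fun b => rfl
      right_inv := by rintro ⟨⟨i, b⟩, h⟩; dsimp only at h; subst h; rfl }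
  rw [← sign_extendDomain (F a) f]
  congr 1
  ext1 ⟨i, b⟩
  by_cases h : i = a
  · subst h
    have := extendDomain_apply_image (F i) f b
    exact this.symm
  · rw [extendDomain_apply_not_subtype _ _ (by simpa using h)]
    simp [hF i h]

lemma sign_sigma {ι : Type*} [Fintype ι] [DecidableEq ι] {B : ι → Type*} [∀ i, Fintype (B i)]
    [∀ i, DecidableEq (B i)] (F : ∀ i, Perm (B i)) (hF : ∀ i, sign (F i) = 1) :
    sign (Equiv.sigmaCongrRight F) = 1 := by
  have key : ∀ S : Finset ι, 
      sign (Equiv.sigmaCongrRight (fun i => if i ∈ S then F i else 1)) = 1 := by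
    intro S
    induction S using Finset.induction_on with
    | empty => 
      have : (Equiv.sigmaCongrRight (fun i => if i ∈ (∅ : Finset ι) then F i else 1)) = 1 := by
        ext1 ⟨i, b⟩; simp
      rw [this, map_one]
    | insert a S ha ih =>
      have : (Equiv.sigmaCongrRight (fun i => if i ∈ insert a S then F i else 1)) =
        (Equiv.sigmaCongrRight (fun i => if i = a then F i else 1)) *
        (Equiv.sigmaCongrRight (fun i => if i ∈ S then F i else 1)) := by
        ext1 ⟨i, b⟩
        by_cases hi : i = a
        · subst hi; simp [ha]
        · simp [hi]
      rw [this, map_mul, ih, mul_one, sign_single _ a (fun i hi => by simp [hi])]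
      simp [hF]
  have := key Finset.univ
  simpa using this

/-- sheet shift -/
def shiftY {ι : Type*} (m : ι → ℕ) : Perm (Σ i, ZMod (m i)) :=
  Equiv.sigmaCongrRight (fun _ => Equiv.addRight 1)

lemma shiftY_apply {ι : Type*} (m : ι → ℕ) (i : ι) (j : ZMod (m i)) :
    shiftY m ⟨i, j⟩ = ⟨i, j + 1⟩ := rfl

/-- shift on the upper sheet -/
def sheet {Y : Type*} (r : Perm Y) : Perm (Y × Bool) where
  toFun p := if p.2 then (r p.1, true) else (p.1, false)
  invFun p := if p.2 then (r.symm p.1, true) else (p.1, false)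
  left_inv := by rintro ⟨y, _ | _⟩ <;> simp
  right_inv := by rintro ⟨y, _ | _⟩ <;> simp

lemma sheet_false {Y : Type*} (r : Perm Y) (y : Y) : sheet r (y, false) = (y, false) := rfl
lemma sheet_true {Y : Type*} (r : Perm Y) (y : Y) : sheet r (y, true) = (r y, true) := rfl

lemma local_rel {Y : Type*} (r : Perm Y) (x x' : Perm (Y × Bool)) (σ σ' : Perm Y)
    (hσ : ∀ p, (x p).1 = σ p.1) (hσ' : ∀ p, (x' p).1 = σ' p.1)
    (hx : ∀ p, sheet r (x' p) = x (sheet r p)) (y : Y) :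
    (x (r y, false)).2 = (x (y, false)).2 ∧
    ((x (y, false)).2 = false → σ (r y) = r (σ y)) ∧
    ((x (y, false)).2 = true → r (σ (r y)) = σ y) := by
  have flip : ∀ (z : Perm (Y × Bool)) (τ : Perm Y), (∀ p, (z p).1 = τ p.1) →
      ∀ y, (z (y, true)).2 = !(z (y, false)).2 := by
    intro z τ h y
    have h1 : z (y, true) ≠ z (y, false) := fun h => by simpa using z.injective h
    by_contra h2
    apply h1
    apply Prod.ext
    · rw [h, h]
    · generalize (z (y, true)).2 = u at *
      generalize (z (y, false)).2 = v at *
      cases u <;> cases v <;> simp_all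
  have a1 := flip x σ hσ y
  have a2 := flip x σ hσ (r y)
  have a3 := flip x' σ' hσ' y
  have b1 := hx (y, false)
  have b2 := hx (y, true)
  rw [sheet_false] at b1
  rw [sheet_true] at b2
  have c1 := hσ (y, false)
  have c2 := hσ (r y, true)
  have c3 := hσ' (y, false)
  have c4 := hσ' (y, true)
  generalize x (y, false) = p1 at *
  generalize x (y, true) = p2 at *
  generalize x (r y, false) = p3 at *
  generalize x (r y, true) = p4 at *
  generalize x' (y, false) = q1 at *
  generalize x' (y, true) = q2 at *
  obtain ⟨p1, u1⟩ := p1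
  obtain ⟨p2, u2⟩ := p2
  obtain ⟨p3, u3⟩ := p3
  obtain ⟨p4, u4⟩ := p4
  obtain ⟨q1, v1⟩ := q1
  obtain ⟨q2, v2⟩ := q2
  dsimp only at *
  subst c1 c2 c3 c4
  cases u1 <;> cases u3 <;> cases v1 <;> simp_all [sheet]

lemma even_stab {ι : Type*} [Fintype ι] [DecidableEq ι] (m : ι → ℕ) [∀ i, NeZero (m i)]
    (hinj : Function.Injective m) (h1 : ∀ i, m i % 4 = 1)
    (x x' : Perm ((Σ i, ZMod (m i)) × Bool)) (σ σ' : Perm (Σ i, ZMod (m i)))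
    (hσ : ∀ p, (x p).1 = σ p.1) (hσ' : ∀ p, (x' p).1 = σ' p.1)
    (hx : ∀ p, sheet (shiftY m) (x' p) = x (sheet (shiftY m) p)) : sign σ = 1 := by
  have loc := local_rel (shiftY m) x x' σ σ' hσ hσ' hx
  let β : ι → Bool := fun i => (x (⟨i, 0⟩, false)).2
  let κ : ι → ι := fun i => (σ ⟨i, 0⟩).1
  let a : ∀ i, ZMod (m (κ i)) := fun i => (σ ⟨i, 0⟩).2
  have ha : ∀ i, σ ⟨i, 0⟩ = ⟨κ i, a i⟩ := fun i => rfl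
  have ind : ∀ i (n : ℕ), (x (⟨i, (n : ZMod (m i))⟩, false)).2 = β i ∧
      σ ⟨i, (n : ZMod (m i))⟩ = ⟨κ i, if β i then a i - (n : ZMod (m (κ i))) else a i + n⟩ := by
    intro i n
    induction n with
    | zero => simp [β, ha]
    | succ n ih =>
      obtain ⟨l1, l2, l3⟩ := loc ⟨i, (n : ZMod (m i))⟩
      rw [shiftY_apply m i] at l1 l2 l3
      rw [Nat.cast_succ]
      refine ⟨l1.trans ih.1, ?_⟩
      cases hb : β i with
      | false => 
        rw [l2 (ih.1.trans hb), ih.2, hb, shiftY_apply]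
        simp [add_assoc]
      | true =>
        have := l3 (ih.1.trans hb)
        apply (shiftY m).injective
        rw [this, ih.2, hb, shiftY_apply]
        simp
        ring
  have form : ∀ i (j : ZMod (m i)), ∃ n : ℕ, j = n ∧ 
      σ ⟨i, j⟩ = ⟨κ i, if β i then a i - (n : ZMod (m (κ i))) else a i + n⟩ := by
    intro i j
    refine ⟨j.val, by simp, ?_⟩
    have := (ind i j.val).2
    simpa using this
  have dvd : ∀ i, m (κ i) ∣ m i := by
    intro i
    have h := (ind i (m i)).2
    rw [ZMod.natCast_self, ha, Sigma.mk.injEq] at h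
    have h := eq_of_heq h.2
    rw [← ZMod.natCast_eq_zero_iff]
    split_ifs at h with hb
    · exact (sub_eq_self.1 h.symm)
    · exact (add_eq_left.1 h.symm)
  have hsurj : Function.Surjective κ := by
    intro i
    obtain ⟨⟨l, j⟩, hl⟩ := σ.surjective ⟨i, 0⟩
    obtain ⟨n, _, hn⟩ := form l j
    rw [hn, Sigma.mk.injEq] at hl
    exact ⟨l, hl.1⟩
  have hbij : Function.Bijective κ := Finite.surjective_iff_bijective.1 hsurj
  have hle : ∀ i ∈ (Finset.univ : Finset ι), m (κ i) ≤ m i := fun i _ =>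
    Nat.le_of_dvd (NeZero.pos _) (dvd i)
  have hsum : ∑ i, m (κ i) = ∑ i, m i := hbij.sum_comp m
  have hκ : ∀ i, κ i = i := fun i =>
    hinj ((Finset.sum_eq_sum_iff_of_le hle).1 hsum i (Finset.mem_univ i))
  have ha' : ∀ i, ∃ b : ZMod (m i), ∀ j : ZMod (m i), 
      σ ⟨i, j⟩ = ⟨i, if β i then b - j else b + j⟩ := by
    intro i
    have hf := form i
    generalize a i = b at hf
    revert b
    rw [hκ i]
    intro b hf
    refine ⟨b, fun j => ?_⟩
    obtain ⟨n, rfl, hn⟩ := hf j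
    exact hn
  choose b hb using ha'
  have hσF : σ = Equiv.sigmaCongrRight (fun i => if β i then Equiv.subLeft (b i) else
      Equiv.addLeft (b i)) := by
    ext1 ⟨i, j⟩
    rw [hb, Equiv.sigmaCongrRight_apply]
    cases β i <;> simp
  rw [hσF]
  apply sign_sigma
  intro i
  have := h1 i
  cases β i
  · exact sign_addLeft_odd (by omega) _
  · simp only [if_true]
    rw [sign_subLeft_odd (2 * (m i / 4)) (by omega)]
    simp
end Comb1
section Comb2

open Equiv Equiv.Perm

/-- standard labelling -/
def stdE (k : ℕ) : Fin k × Bool ≃ Fin (2 * k) where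
  toFun p := ⟨2 * p.1 + (if p.2 then 1 else 0), by have := p.1.isLt; split_ifs <;> omega⟩
  invFun i := (⟨(i : ℕ) / 2, by have := i.isLt; omega⟩, decide ((i : ℕ) % 2 = 1))
  left_inv := by
    rintro ⟨⟨a, ha⟩, _ | _⟩
    · simp
    · simp; omega
  right_inv := by
    rintro ⟨i, hi⟩
    simp only [decide_eq_true_eq, Fin.mk.injEq]
    split_ifs <;> omega

lemma stdE_div (k : ℕ) (p : Fin k × Bool) : ((stdE k p : ℕ) / 2) = (p.1 : ℕ) := by
  obtain ⟨⟨a, ha⟩, _ | _⟩ := p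
  · simp [stdE]
  · simp [stdE]; omega

lemma ind_mul {k : ℕ} {g g' : Perm (Fin (2 * k))} {σ σ' : Perm (Fin k)}
    (h : InducedPairPerm g σ) (h' : InducedPairPerm g' σ') :
    InducedPairPerm (g * g') (σ * σ') := by
  intro i
  rw [Perm.mul_apply, h, Perm.mul_apply]
  congr 2
  exact Fin.ext (h' i)

lemma ind_inv {k : ℕ} {g : Perm (Fin (2 * k))} {σ : Perm (Fin k)}
    (h : InducedPairPerm g σ) : InducedPairPerm g⁻¹ σ⁻¹ := by
  intro i
  have h1 := h (g⁻¹ i)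
  rw [show g (g⁻¹ i) = i by simp] at h1
  have h2 : (⟨(i : ℕ) / 2, by have := i.isLt; omega⟩ : Fin k) =
    σ ⟨((g⁻¹ i : Fin (2 * k)) : ℕ) / 2, by have := (g⁻¹ i).isLt; omega⟩ := Fin.ext h1
  rw [h2]; simp

lemma ind_of {k : ℕ} {Y : Type*} (Φ : Y × Bool ≃ Fin (2 * k)) (η : Y ≃ Fin k)
    (hΦ : ∀ p, ((Φ p : ℕ) / 2) = η p.1) (x : Perm (Y × Bool)) (σ : Perm Y)
    (h : ∀ p, (x p).1 = σ p.1) : InducedPairPerm (Φ.permCongr x) (η.permCongr σ) := by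
  intro i
  obtain ⟨p, rfl⟩ := Φ.surjective i
  rw [Equiv.permCongr_apply, Equiv.symm_apply_apply, hΦ, h]
  congr 1
  rw [Equiv.permCongr_apply]
  congr 2
  rw [Equiv.eq_symm_apply]
  exact Fin.ext (hΦ p).symm

lemma of_ind {k : ℕ} {Y : Type*} (Φ : Y × Bool ≃ Fin (2 * k)) (η : Y ≃ Fin k)
    (hΦ : ∀ p, ((Φ p : ℕ) / 2) = η p.1) (z : Perm (Fin (2 * k))) (τ : Perm (Fin k))
    (h : InducedPairPerm z τ) (p) : (Φ.symm.permCongr z p).1 = η.symm.permCongr τ p.1 := by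
  rw [Equiv.permCongr_apply, Equiv.permCongr_apply, Equiv.symm_symm, Equiv.symm_symm,
    Equiv.eq_symm_apply]
  apply Fin.ext
  rw [← hΦ, Equiv.apply_symm_apply, h]
  congr 2
  exact Fin.ext (hΦ p)

lemma exists_parts (k : ℕ) (hk : 25 ≤ k) : ∃ (r : ℕ) (m : Fin r → ℕ), Function.Injective m ∧
    (∀ i, m i % 4 = 1) ∧ ∑ i, m i = k := by
  have h : k % 4 = 0 ∨ k % 4 = 1 ∨ k % 4 = 2 ∨ k % 4 = 3 := by omega
  rcases h with h | h | h | h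
  · refine ⟨4, ![1, 5, 9, k - 15], ?_, ?_, ?_⟩
    · intro i j hij
      fin_cases i <;> fin_cases j <;> simp at hij ⊢ <;> omega
    · intro i
      fin_cases i <;> simp <;> omega
    · simp [Fin.sum_univ_four]; omega
  · refine ⟨1, ![k], ?_, ?_, ?_⟩
    · intro i j hij
      exact Subsingleton.elim _ _
    · intro i
      fin_cases i; simpa using h
    · simp
  · refine ⟨2, ![1, k - 1], ?_, ?_, ?_⟩
    · intro i j hij
      fin_cases i <;> fin_cases j <;> simp at hij ⊢ <;> omega
    · intro i
      fin_cases i <;> simp <;> omega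
    · simp [Fin.sum_univ_two]; omega
  · refine ⟨3, ![1, 5, k - 6], ?_, ?_, ?_⟩
    · intro i j hij
      fin_cases i <;> fin_cases j <;> simp at hij ⊢ <;> omega
    · intro i
      fin_cases i <;> simp <;> omega
    · simp [Fin.sum_univ_three]; omega

lemma part_one (k : ℕ) (hk : 25 ≤ k) (H : Subgroup (Perm (Fin (2 * k))))
    (hH : ∀ g : Perm (Fin (2 * k)), g ∈ H ↔
      ∃ σ : Perm (Fin k), InducedPairPerm g σ ∧ sign σ = 1) : ¬ IsMultFree H := by
  obtain ⟨r, m, hinj, h1, hsum⟩ := exists_parts k hk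
  have : ∀ i, NeZero (m i) := fun i => ⟨fun h => by have := h1 i; omega⟩
  have hcard : Fintype.card (Σ i, ZMod (m i)) = Fintype.card (Fin k) := by
    rw [Fintype.card_sigma]; simp [ZMod.card, hsum]
  let η : (Σ i, ZMod (m i)) ≃ Fin k := Fintype.equivOfCardEq hcard
  let Φ : (Σ i, ZMod (m i)) × Bool ≃ Fin (2 * k) :=
    (Equiv.prodCongr η (Equiv.refl Bool)).trans (stdE k)
  have hΦ : ∀ p, ((Φ p : ℕ) / 2) = η p.1 := fun p => by
    simp [Φ, stdE_div]
  let τ : Perm (Fin k) := swap ⟨0, by omega⟩ ⟨1, by omega⟩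
  have hτ : sign τ = -1 := sign_swap (by simp)
  let t : Perm (Fin (2 * k)) := (stdE k).permCongr (Equiv.prodCongr τ (Equiv.refl Bool))
  have ht : InducedPairPerm t τ := by
    have := ind_of (stdE k) (Equiv.refl _) (fun p => by simp [stdE_div])
      (Equiv.prodCongr τ (Equiv.refl Bool)) τ (fun p => by simp)
    exact this
  let g : Perm (Fin (2 * k)) := Φ.permCongr (sheet (shiftY m))
  refine not_multfree H t g ?_ ?_ ?_
  · intro h hh
    obtain ⟨σ, h2, h3⟩ := (hH h).1 hh
    refine (hH _).2 ⟨_, ind_mul (ind_mul (ind_inv ht) h2) ht, ?_⟩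
    simp [h3, hτ]
  · intro h hh
    obtain ⟨σ, h2, h3⟩ := (hH h).1 hh
    refine (hH _).2 ⟨_, ind_mul (ind_mul ht h2) (ind_inv ht), ?_⟩
    simp [h3, hτ]
  · intro a ha b hb hab
    obtain ⟨σa, ha1, ha2⟩ := (hH a).1 ha
    obtain ⟨σb, hb1, hb2⟩ := (hH b).1 hb
    have hx := ind_mul (ind_inv ha1) ht
    have hx' := ind_mul ht hb1
    have hcomm : g * (t * b) = (a⁻¹ * t) * g := by
      rw [mul_assoc a⁻¹, hab]; group
    have key := even_stab m hinj h1 (Φ.symm.permCongr (a⁻¹ * t)) (Φ.symm.permCongr (t * b))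
      (η.symm.permCongr (σa⁻¹ * τ)) (η.symm.permCongr (τ * σb))
      (of_ind Φ η hΦ _ _ hx) (of_ind Φ η hΦ _ _ hx') (by
        intro p
        have := Equiv.congr_fun hcomm (Φ p)
        apply Φ.injective
        simpa [g, Equiv.permCongr_apply] using this)
    rw [sign_permCongr] at key
    simp [ha2, hτ] at key

end Comb2
section Comb3

open Equiv Equiv.Perm

/-- flip of the sheets -/
def flipB (Y : Type*) : Perm (Y × Bool) := Equiv.prodCongr (Equiv.refl Y) Equiv.boolNot

lemma flipB_apply {Y : Type*} (y : Y) (b : Bool) : flipB Y (y, b) = (y, !b) := rfl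

/-- the second matching of the model -/
def flip2 {Y : Type*} (r : Perm Y) : Perm (Y × Bool) := sheet r * flipB Y * (sheet r)⁻¹

lemma flip2_false {Y : Type*} (r : Perm Y) (y : Y) : flip2 r (y, false) = (r y, true) := rfl

lemma flip2_true {Y : Type*} (r : Perm Y) (y : Y) : flip2 r (r y, true) = (y, false) := by
  have : (sheet r)⁻¹ (r y, true) = (y, true) := by
    rw [Perm.inv_eq_iff_eq, sheet_true]
  simp only [flip2, Perm.mul_apply, this]
  rfl

/-- the reversing involution -/
def revF {ι : Type*} (m : ι → ℕ) (p : (Σ i, ZMod (m i)) × Bool) : (Σ i, ZMod (m i)) × Bool :=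
  (⟨p.1.1, (if p.2 then 1 else 0) - p.1.2⟩, p.2)

lemma revF_inv {ι : Type*} (m : ι → ℕ) : Function.Involutive (revF m) := by
  rintro ⟨⟨i, j⟩, b⟩
  simp only [revF]
  congr 2
  exact sub_sub_cancel _ _

/-- the reversing involution -/
def rev {ι : Type*} (m : ι → ℕ) : Perm ((Σ i, ZMod (m i)) × Bool) := (revF_inv m).toPerm

lemma rev_apply {ι : Type*} (m : ι → ℕ) (i : ι) (j : ZMod (m i)) (b : Bool) :
    rev m (⟨i, j⟩, b) = (⟨i, (if b then 1 else 0) - j⟩, b) := rfl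

lemma rev_flip {ι : Type*} (m : ι → ℕ) (p) :
    rev m (flipB _ p) = flip2 (shiftY m) (rev m p) := by
  obtain ⟨⟨i, j⟩, _ | _⟩ := p
  · rw [flipB_apply, rev_apply, rev_apply, flip2_false, shiftY_apply]
    simp; ring
  · rw [flipB_apply, rev_apply, rev_apply]
    have : (⟨i, (if true then 1 else 0) - j⟩ : Σ i, ZMod (m i)) = shiftY m ⟨i, - j⟩ := by
      rw [shiftY_apply]; simp; ring
    rw [this, flip2_true]
    simp

lemma caseA {ι : Type*} [Fintype ι] [DecidableEq ι] (m : ι → ℕ) [∀ i, NeZero (m i)] (i : ι)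
    (hi : m i % 2 = 0) : ∃ (y : Perm ((Σ i, ZMod (m i)) × Bool)) (σ : Perm (Σ i, ZMod (m i))),
      (∀ p, rev m (y (rev m (y p))) = p) ∧ (∀ p, (y p).1 = σ p.1) ∧ sign σ = -1 := by
  let δ : ∀ l, ZMod (m l) := Pi.single i 1
  let σ : Perm (Σ i, ZMod (m i)) := Equiv.sigmaCongrRight (fun l => Equiv.addRight (δ l))
  refine ⟨Equiv.prodCongr σ (Equiv.refl _), σ, ?_, ?_, ?_⟩
  · rintro ⟨⟨l, j⟩, b⟩
    have h1 : ∀ l j b, (Equiv.prodCongr σ (Equiv.refl Bool)) (⟨l, j⟩, b) = (⟨l, j + δ l⟩, b) :=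
      fun _ _ _ => rfl
    rw [h1, rev_apply, h1, rev_apply]
    congr 2
    ring
  · intro p; rfl
  · rw [sign_single _ i]
    · simp only [δ, Pi.single_eq_same]
      exact sign_addRight_one hi
    · intro l hl
      simp only [δ, Pi.single_eq_of_ne hl]
      ext x; simp

lemma caseB {ι : Type*} [Fintype ι] [DecidableEq ι] (m : ι → ℕ) [∀ i, NeZero (m i)] (i : ι)
    (hi : m i % 4 = 3) : ∃ (y : Perm ((Σ i, ZMod (m i)) × Bool)) (σ : Perm (Σ i, ZMod (m i))),
      (∀ p, rev m (y (rev m (y p))) = p) ∧ (∀ p, (y p).1 = σ p.1) ∧ sign σ = -1 := by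
  let A : ∀ l, ZMod (m l) := fun l => (((m l + 1) / 2 : ℕ) : ZMod (m l))
  have hA : A i + A i = 1 := by
    have : (((m i + 1) / 2 + (m i + 1) / 2 : ℕ) : ZMod (m i)) = ((m i + 1 : ℕ) : ZMod (m i)) := by
      congr 1; omega
    simpa [A] using this
  let σ : Perm (Σ i, ZMod (m i)) := Equiv.sigmaCongrRight
    (fun l => if l = i then Equiv.subLeft (A l) else 1)
  have hσ1 : ∀ j, σ ⟨i, j⟩ = ⟨i, A i - j⟩ := by
    intro j; simp [σ]
  have hσ2 : ∀ l j, l ≠ i → σ ⟨l, j⟩ = ⟨l, j⟩ := by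
    intro l j hl; simp [σ, hl]
  let yF : (Σ i, ZMod (m i)) × Bool → (Σ i, ZMod (m i)) × Bool := fun p =>
    (σ p.1, if p.1.1 = i then !p.2 else p.2)
  have y1 : ∀ j b, yF (⟨i, j⟩, b) = (⟨i, A i - j⟩, !b) := by
    intro j b; simp [yF, hσ1]
  have y2 : ∀ l j b, l ≠ i → yF (⟨l, j⟩, b) = (⟨l, j⟩, b) := by
    intro l j b hl; simp [yF, hσ2 l j hl, hl]
  have hy : Function.Involutive yF := by
    rintro ⟨⟨l, j⟩, b⟩
    by_cases hl : l = i
    · subst hl; rw [y1, y1]; simp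
    · rw [y2 _ _ _ hl, y2 _ _ _ hl]
  refine ⟨hy.toPerm, σ, ?_, ?_, ?_⟩
  · rintro ⟨⟨l, j⟩, b⟩
    rw [Function.Involutive.coe_toPerm]
    by_cases hl : l = i
    · subst hl
      rw [y1 j b, rev_apply m l, y1 _ (!b), rev_apply m l]
      cases b
      · simp only [Bool.not_false, Bool.not_true, if_true, Prod.mk.injEq, and_true]
        congr 1
        simp
        linear_combination -hA
      · simp only [Bool.not_false, Bool.not_true, if_true, Prod.mk.injEq, and_true]
        congr 1
        simp
        linear_combination -hA
    · rw [y2 l j b hl, rev_apply m l j b, y2 l _ b hl, rev_apply m l _ b]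
      simp
  · intro p; rfl
  · rw [sign_single _ i]
    · simp only [if_true]
      rw [sign_subLeft_odd (2 * (m i / 4) + 1) (by omega)]
      simp [pow_succ]
    · intro l hl
      simp [hl]

lemma sigma_cast {ι : Type*} (m : ι → ℕ) (l l' : ι) (h : l' = l) (hm : m l = m l')
    (j : ZMod (m l)) :
    (⟨l', ZMod.ringEquivCongr hm j⟩ : Σ i, ZMod (m i)) = ⟨l, j⟩ := by
  subst h
  simp [ZMod.ringEquivCongr_refl]

lemma caseC {ι : Type*} [Fintype ι] [DecidableEq ι] (m : ι → ℕ) [∀ i, NeZero (m i)] (i i' : ι)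
    (hne : i ≠ i') (hii : m i = m i') (hi : m i % 2 = 1) :
    ∃ (y : Perm ((Σ i, ZMod (m i)) × Bool)) (σ : Perm (Σ i, ZMod (m i))),
      (∀ p, rev m (y (rev m (y p))) = p) ∧ (∀ p, (y p).1 = σ p.1) ∧ sign σ = -1 := by
  let q := swap i i'
  have hq : ∀ l, m l = m (q l) := by
    intro l
    by_cases h : l = i
    · subst h; simp [q, hii]
    by_cases h' : l = i'
    · subst h'; simp [q, hii]
    simp [q, swap_apply_of_ne_of_ne h h']
  have hqq : ∀ l, q (q l) = l := fun l => by simp [q]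
  let σF : (Σ i, ZMod (m i)) → (Σ i, ZMod (m i)) := fun p =>
    ⟨q p.1, ZMod.ringEquivCongr (hq p.1) p.2⟩
  have hσF : ∀ l j, σF ⟨l, j⟩ = ⟨q l, ZMod.ringEquivCongr (hq l) j⟩ := fun _ _ => rfl
  have hinv : Function.Involutive σF := by
    rintro ⟨l, j⟩
    rw [hσF l j, hσF (q l) _]
    have := ZMod.ringEquivCongr_ringEquivCongr_apply (hq l) (hq (q l)) j
    rw [this]
    exact sigma_cast m l _ (hqq l) _ j
  let σ : Perm (Σ i, ZMod (m i)) := hinv.toPerm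
  refine ⟨Equiv.prodCongr σ (Equiv.refl _), σ, ?_, ?_, ?_⟩
  · rintro ⟨⟨l, j⟩, b⟩
    have h1 : ∀ l j b, (Equiv.prodCongr σ (Equiv.refl Bool)) (⟨l, j⟩, b) = 
      (⟨q l, ZMod.ringEquivCongr (hq l) j⟩, b) := fun _ _ _ => rfl
    rw [h1 l j b, rev_apply m (q l) _ b, h1 (q l) _ b, rev_apply m (q (q l)) _ b]
    congr 1
    have h2 := hinv ⟨l, j⟩
    rw [hσF l j, hσF (q l) _] at h2
    rw [← h2]
    congr 1
    rw [map_sub]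
    cases b <;> simp
  · intro p; rfl
  · have h2 : σ ^ 2 = 1 := by
      ext1 p; rw [pow_two]; exact hinv p
    rw [sign_of_pow_two_eq_one h2]
    have hc : Fintype.card (Σ i, ZMod (m i)) - Fintype.card (Function.fixedPoints σ) = 2 * m i := by
      have hsup : σ.support = ({i, i'} : Finset ι).sigma (fun _ => Finset.univ) := by
        ext ⟨l, j⟩
        rw [Perm.mem_support]
        simp only [Finset.mem_sigma, Finset.mem_univ, and_true, Finset.mem_insert,
          Finset.mem_singleton]
        show σF ⟨l, j⟩ ≠ _ ↔ _
        rw [hσF l j]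
        constructor
        · intro h
          by_contra h2
          push Not at h2
          exact h (sigma_cast m l (q l) (swap_apply_of_ne_of_ne h2.1 h2.2) _ j)
        · intro h h2
          have h3 : q l = l := congrArg Sigma.fst h2
          rcases h with rfl | rfl
          · exact hne (by simpa [q] using h3.symm)
          · exact hne (by simpa [q] using h3)
      rw [σ.card_fixedPoints, Nat.sub_sub_self σ.sum_cycleType_le, sum_cycleType, hsup,
        Finset.card_sigma, Finset.sum_pair hne]
      simp only [Finset.card_univ, ZMod.card]
      omega
    rw [hc]
    simp [Odd.neg_one_pow (Nat.odd_iff.2 hi)]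

lemma no_parts {ι : Type*} [Fintype ι] (m : ι → ℕ) (hinj : Function.Injective m)
    (h1 : ∀ i, m i % 4 = 1) (hs : ∑ i, m i = 24) : False := by
  classical
  have e : ∑ x ∈ Finset.univ.image m, x = 24 := by
    rw [Finset.sum_image (fun _ _ _ _ h => hinj h), hs]
  have sub : Finset.univ.image m ∈ ({1, 5, 9, 13, 17, 21} : Finset ℕ).powerset := by
    rw [Finset.mem_powerset]
    intro x hx
    obtain ⟨i, _, rfl⟩ := Finset.mem_image.1 hx
    have h2 : m i ≤ 24 := by rw [← hs]; exact Finset.single_le_sum (by simp) (Finset.mem_univ i)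
    have := h1 i
    simp only [Finset.mem_insert, Finset.mem_singleton]
    omega
  have : ∀ S ∈ ({1, 5, 9, 13, 17, 21} : Finset ℕ).powerset, ∑ x ∈ S, x ≠ 24 := by decide
  exact this _ sub e

lemma model_two {ι : Type*} [Fintype ι] [DecidableEq ι] (m : ι → ℕ) [∀ i, NeZero (m i)]
    (hs : ∑ i, m i = 24) : 
    ∃ (y : Perm ((Σ i, ZMod (m i)) × Bool)) (σ : Perm (Σ i, ZMod (m i))),
      (∀ p, rev m (y (rev m (y p))) = p) ∧ (∀ p, (y p).1 = σ p.1) ∧ sign σ = -1 := by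
  by_cases h : ∀ i, m i % 4 = 1
  · have : ¬ Function.Injective m := fun hinj => no_parts m hinj h hs
    simp only [Function.Injective, not_forall] at this
    obtain ⟨i, i', hii, hne⟩ := this
    exact caseC m i i' hne hii (by have := h i; omega)
  · push Not at h
    obtain ⟨i, hi⟩ := h
    by_cases h2 : m i % 2 = 0
    · exact caseA m i h2
    · exact caseB m i (by omega)

end Comb3
section Comb4

open Equiv Equiv.Perm

lemma perm_normal {Z : Type} [Finite Z] (r : Perm Z) :
    ∃ (ι : Type) (_ : Fintype ι) (_ : DecidableEq ι) (m : ι → ℕ) (_ : ∀ i, NeZero (m i))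
      (ψ : (Σ i, ZMod (m i)) ≃ Z), ∀ p, ψ (shiftY m p) = r (ψ p) := by
  classical
  let ι := Quotient (SameCycle.setoid r)
  have hfin : Finite ι := Quotient.finite _
  let b : ι → Z := Quotient.out
  let m : ι → ℕ := fun i => Function.minimalPeriod r (b i)
  have hm : ∀ i, NeZero (m i) := by
    intro i
    refine ⟨(Function.minimalPeriod_pos_of_mem_periodicPts ?_).ne'⟩
    obtain ⟨n, hn, h⟩ := isOfFinOrder_iff_pow_eq_one.1 (isOfFinOrder_of_finite r)
    refine ⟨n, hn, ?_⟩
    rw [Function.IsPeriodicPt, Function.IsFixedPt, ← Perm.coe_pow, h]; rfl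
  let f : (Σ i, ZMod (m i)) → Z := fun p => (r^[p.2.val]) (b p.1)
  have hmod : ∀ i n, (r^[n % m i]) (b i) = (r^[n]) (b i) := fun i n =>
    Function.iterate_mod_minimalPeriod_eq
  have hf : Function.Bijective f := by
    constructor
    · rintro ⟨i, j⟩ ⟨i', j'⟩ h
      simp only [f] at h
      have hi : i = i' := by
        rw [← Quotient.out_eq i, ← Quotient.out_eq i']
        apply Quotient.sound
        show SameCycle r (b i) (b i')
        rw [← Perm.coe_pow, ← Perm.coe_pow] at h
        have h1 : SameCycle r ((r ^ j.val) (b i)) ((r ^ j'.val) (b i')) := by rw [h]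
        simpa using h1
      subst hi
      congr 1
      exact ZMod.val_injective _ (Function.iterate_injOn_Iio_minimalPeriod
        (ZMod.val_lt j) (ZMod.val_lt j') h)
    · intro z
      have h : SameCycle r (b ⟦z⟧) z := Quotient.exact (Quotient.out_eq (⟦z⟧ : ι))
      obtain ⟨n, hn⟩ := h.exists_nat_pow_eq
      refine ⟨⟨⟦z⟧, (n : ZMod (m ⟦z⟧))⟩, ?_⟩
      simp only [f]
      rw [ZMod.val_natCast, hmod, ← Perm.coe_pow, hn]
  refine ⟨ι, Fintype.ofFinite ι, inferInstance, m, hm, Equiv.ofBijective f hf, ?_⟩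
  rintro ⟨i, j⟩
  rw [shiftY_apply]
  simp only [Equiv.ofBijective_apply, f]
  rw [← Function.iterate_succ_apply' (f := r), ← hmod i (j.val + 1), ← ZMod.val_natCast]
  simp

lemma pair_normal {X : Type} [Finite X] (f1 f2 : Perm X) (h1 : f1 * f1 = 1) (h2 : f2 * f2 = 1)
    (n1 : ∀ x, f1 x ≠ x) (n2 : ∀ x, f2 x ≠ x) :
    ∃ (ι : Type) (_ : Fintype ι) (_ : DecidableEq ι) (m : ι → ℕ) (_ : ∀ i, NeZero (m i))
      (Ψ : (Σ i, ZMod (m i)) × Bool ≃ X), (∀ p, f1 (Ψ p) = Ψ (flipB _ p)) ∧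
        ∀ p, f2 (Ψ p) = Ψ (flip2 (shiftY m) p) := by
  classical
  let c := f1 * f2
  have i1 : f1⁻¹ = f1 := inv_eq_of_mul_eq_one_right h1
  have i2 : f2⁻¹ = f2 := inv_eq_of_mul_eq_one_right h2
  have a1 : ∀ x, f1 (f1 x) = x := fun x => by rw [← Perm.mul_apply, h1]; rfl
  have a2 : ∀ x, f2 (f2 x) = x := fun x => by rw [← Perm.mul_apply, h2]; rfl
  have hc : f1 * c * f1⁻¹ = c⁻¹ := by
    rw [mul_inv_rev, i1, i2, ← mul_assoc, h1, one_mul]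
  have hcz : ∀ (i : ℤ) x, f1 ((c ^ i) x) = (c ^ (-i)) (f1 x) := by
    intro i x
    have : f1 * c ^ i * f1⁻¹ = c ^ (-i) := by
      rw [← conj_zpow, hc, inv_zpow']
    rw [← this]; simp
  have hf2 : ∀ x, f2 x = f1 (c x) := fun x => by simp [c, a1]
  have hns : ∀ x, ¬ SameCycle c x (f1 x) := by
    rintro x ⟨j, hj⟩
    rcases Int.even_or_odd' j with ⟨i, hi | hi⟩
    · apply n1 ((c ^ i) x)
      rw [hcz, ← hj, ← Perm.mul_apply, ← zpow_add]
      congr 2; omega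
    · apply n2 ((c ^ i) x)
      rw [hf2, ← Perm.mul_apply c, ← zpow_one_add, hcz, ← hj, ← Perm.mul_apply, ← zpow_add]
      congr 2; omega
  have hfin : Finite (Quotient (SameCycle.setoid c)) := Quotient.finite _
  obtain ⟨n, ⟨e⟩⟩ := Finite.exists_equiv_fin (Quotient (SameCycle.setoid c))
  let lab : X → Fin n := fun x => e ⟦x⟧
  have hlab : ∀ x y, lab x = lab y ↔ SameCycle c x y := by
    intro x y
    simp only [lab, EmbeddingLike.apply_eq_iff_eq]
    exact ⟨fun h => Quotient.exact h, fun h => Quotient.sound h⟩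
  have hl1 : ∀ x, lab x ≠ lab (f1 x) := fun x h => hns x ((hlab _ _).1 h)
  have hl2 : ∀ x, lab (c x) = lab x := fun x => (hlab _ _).2 (by simp; rfl)
  have hl3 : ∀ x, lab (f1 (c x)) = lab (f1 x) := fun x => (hlab _ _).2 (by
    have := hcz 1 x
    rw [zpow_one] at this
    rw [this]; simp; rfl)
  let P : X → Prop := fun x => lab x < lab (f1 x)
  have hP : ∀ x, P (c x) ↔ P x := by
    intro x; simp only [P, hl2, hl3]
  have hPf : ∀ x, P (f1 x) ↔ ¬ P x := by
    intro x
    simp only [P, a1, not_lt]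
    exact ⟨fun h => h.le, fun h => lt_of_le_of_ne h (hl1 x).symm⟩
  obtain ⟨ι, _, _, m, hm, ψ, hψ⟩ := perm_normal (Z := {x // P x}) (c.subtypePerm hP)
  let F : (Σ i, ZMod (m i)) × Bool → X := fun p =>
    if p.2 then f1 (ψ p.1) else ψ p.1
  have F0 : ∀ y, F (y, false) = ψ y := fun y => rfl
  have F1 : ∀ y, F (y, true) = f1 (ψ y) := fun y => rfl
  have hF : Function.Bijective F := by
    constructor
    · rintro ⟨y, _ | _⟩ ⟨y', _ | _⟩ h
      · rw [F0, F0] at h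
        rw [ψ.injective (Subtype.ext h)]
      · rw [F0, F1] at h
        have := (ψ y).2
        rw [h, hPf] at this
        exact absurd (ψ y').2 this
      · rw [F0, F1] at h
        have := (ψ y').2
        rw [← h, hPf] at this
        exact absurd (ψ y).2 this
      · rw [F1, F1] at h
        rw [ψ.injective (Subtype.ext (f1.injective h))]
    · intro x
      by_cases hx : P x
      · exact ⟨(ψ.symm ⟨x, hx⟩, false), by rw [F0]; simp⟩
      · exact ⟨(ψ.symm ⟨f1 x, (hPf x).2 hx⟩, true), by rw [F1]; simp [a1]⟩
  have hs : ∀ y, f2 (F (y, false)) = F (shiftY m y, true) := by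
    intro y
    rw [F0, F1, hψ, hf2]; rfl
  refine ⟨ι, inferInstance, inferInstance, m, hm, Equiv.ofBijective F hF, ?_, ?_⟩
  · rintro ⟨y, _ | _⟩
    · rw [flipB_apply]; rfl
    · rw [flipB_apply]
      simp only [Equiv.ofBijective_apply, Bool.not_true, F0, F1, a1]
  · rintro ⟨y, _ | _⟩
    · rw [flip2_false]; exact hs y
    · obtain ⟨y, rfl⟩ := (shiftY m).surjective y
      rw [flip2_true]
      simp only [Equiv.ofBijective_apply]
      rw [← hs, a2]

/-- the standard matching -/
def std1 (k : ℕ) : Perm (Fin (2 * k)) := (stdE k).permCongr (flipB (Fin k))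

lemma std1_stdE (k : ℕ) (a : Fin k) (b : Bool) : std1 k (stdE k (a, b)) = stdE k (a, !b) := by
  rw [std1, Equiv.permCongr_apply, Equiv.symm_apply_apply, flipB_apply]

lemma std1_sq (k : ℕ) : std1 k * std1 k = 1 := by
  ext1 x
  obtain ⟨⟨a, b⟩, rfl⟩ := (stdE k).surjective x
  rw [Perm.mul_apply, std1_stdE, std1_stdE, Bool.not_not]; rfl

lemma std1_ne (k : ℕ) (x) : std1 k x ≠ x := by
  obtain ⟨⟨a, b⟩, rfl⟩ := (stdE k).surjective x
  rw [std1_stdE]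
  intro h
  have := (stdE k).injective h
  simp at this

lemma std1_div (k : ℕ) (x) : ((std1 k x : Fin (2 * k)) : ℕ) / 2 = (x : ℕ) / 2 := by
  obtain ⟨⟨a, b⟩, rfl⟩ := (stdE k).surjective x
  rw [std1_stdE, stdE_div, stdE_div]

lemma div_cases (k : ℕ) (x y : Fin (2 * k)) (h : (x : ℕ) / 2 = (y : ℕ) / 2) :
    x = y ∨ x = std1 k y := by
  obtain ⟨⟨a, b⟩, rfl⟩ := (stdE k).surjective x
  obtain ⟨⟨a', b'⟩, rfl⟩ := (stdE k).surjective y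
  rw [stdE_div, stdE_div] at h
  have : a = a' := Fin.ext h
  subst this
  rw [std1_stdE]
  cases b <;> cases b' <;> simp

lemma exists_eta {k : ℕ} {Y : Type*} (Ψ : Y × Bool ≃ Fin (2 * k))
    (h : ∀ p, std1 k (Ψ p) = Ψ (flipB _ p)) :
    ∃ η : Y ≃ Fin k, ∀ p, ((Ψ p : ℕ) / 2) = η p.1 := by
  let f : Y → Fin k := fun y => ⟨(Ψ (y, false) : ℕ) / 2, by have := (Ψ (y, false)).isLt; omega⟩
  have hf : ∀ p, ((Ψ p : ℕ) / 2) = f p.1 := by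
    rintro ⟨y, _ | _⟩
    · rfl
    · show _ = (Ψ (y, false) : ℕ) / 2
      rw [← std1_div k (Ψ (y, false)), h, flipB_apply]; rfl
  have hb : Function.Bijective f := by
    constructor
    · intro y y' hy
      have : (Ψ (y, false) : ℕ) / 2 = (Ψ (y', false) : ℕ) / 2 := congrArg Fin.val hy
      rcases div_cases k _ _ this with h2 | h2
      · simpa using Ψ.injective h2
      · rw [h, flipB_apply] at h2
        simpa using Ψ.injective h2
    · intro a
      obtain ⟨⟨y, b⟩, hy⟩ := Ψ.surjective (stdE k (a, false))
      refine ⟨y, Fin.ext ?_⟩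
      rw [← hf (y, b), hy, stdE_div]
  exact ⟨Equiv.ofBijective f hb, hf⟩

lemma exists_ind {k : ℕ} (z : Perm (Fin (2 * k))) (h : ∀ x, std1 k (z x) = z (std1 k x)) :
    ∃ σ, InducedPairPerm z σ := by
  obtain ⟨η, hη⟩ := exists_eta ((stdE k).trans z) (by
    rintro ⟨a, b⟩
    rw [Equiv.trans_apply, h, std1_stdE, flipB_apply]; rfl)
  refine ⟨η, ?_⟩
  intro i
  obtain ⟨p, rfl⟩ := (stdE k).surjective i
  have := hη p
  rw [Equiv.trans_apply] at this
  rw [this]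
  congr 2
  exact Fin.ext (stdE_div k p).symm

lemma part_two (H : Subgroup (Perm (Fin (2 * 24))))
    (hH : ∀ g : Perm (Fin (2 * 24)), g ∈ H ↔
      ∃ σ : Perm (Fin 24), InducedPairPerm g σ ∧ sign σ = 1) : IsMultFree H := by
  generalize hk : 24 = k at *
  apply gelfand
  intro g
  obtain ⟨ι, _, _, m, _, Ψ, hΨ1, hΨ2⟩ := pair_normal (std1 k) (g * std1 k * g⁻¹) (std1_sq k)
    (by
      have : g * std1 k * g⁻¹ * (g * std1 k * g⁻¹) = g * (std1 k * std1 k) * g⁻¹ := by group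
      rw [this, std1_sq]; simp) (std1_ne k)
    (by
      intro x hx
      apply std1_ne k (g⁻¹ x)
      apply g.injective
      simpa using hx)
  obtain ⟨η, hη⟩ := exists_eta Ψ hΨ1
  have hsum : ∑ i, m i = 24 := by
    have := Fintype.card_congr η
    rw [Fintype.card_sigma] at this
    simpa [ZMod.card, hk] using this
  obtain ⟨y, σ, hy1, hy2, hy3⟩ := model_two m hsum
  let S := Ψ.permCongr (rev m)
  have hS : ∀ p, S (Ψ p) = Ψ (rev m p) := fun p => by simp [S]
  have hSS : S * S = 1 := by
    ext1 x
    obtain ⟨p, rfl⟩ := Ψ.surjective x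
    rw [Perm.mul_apply, hS, hS]
    have : rev m (rev m p) = p := revF_inv m p
    rw [this]; rfl
  have hS1 : ∀ x, S (std1 k x) = (g * std1 k * g⁻¹) (S x) := by
    intro x
    obtain ⟨p, rfl⟩ := Ψ.surjective x
    rw [hΨ1, hS, hS, hΨ2, rev_flip]
  obtain ⟨σ0, h0⟩ := exists_ind (g⁻¹ * S) (by
    intro x
    apply g.injective
    rw [Perm.mul_apply, Perm.mul_apply, hS1]
    simp)
  let T := Ψ.permCongr y
  have hT : ∀ p, T (Ψ p) = Ψ (y p) := fun p => by simp [T]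
  have hST : S * T * (S * T) = 1 := by
    ext1 x
    obtain ⟨p, rfl⟩ := Ψ.surjective x
    simp only [Perm.mul_apply, hS, hT, hy1, Perm.one_apply]
  have hTi : InducedPairPerm T (η.permCongr σ) := ind_of Ψ η hη y σ hy2
  rcases Int.units_eq_one_or (sign σ0) with hs | hs
  · have hx : g⁻¹ * S ∈ H := (hH _).2 ⟨σ0, h0, hs⟩
    refine ⟨_, hx, _, hx, ?_⟩
    calc g⁻¹ = g⁻¹ * (S * S) := by rw [hSS, mul_one]
      _ = _ := by group
  · have hx : g⁻¹ * S * T ∈ H := (hH _).2 ⟨_, ind_mul h0 hTi, by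
      rw [map_mul, sign_permCongr, hs, hy3]; simp⟩
    refine ⟨_, hx, _, hx, ?_⟩
    calc g⁻¹ = g⁻¹ * (S * T * (S * T)) := by rw [hST, mul_one]
      _ = _ := by group

end Comb4

theorem stmt12 :
    (∀ k : ℕ, 25 ≤ k →
      ∀ H : Subgroup (Equiv.Perm (Fin (2 * k))),
        (∀ g : Equiv.Perm (Fin (2 * k)), g ∈ H ↔
          ∃ σ : Equiv.Perm (Fin k), InducedPairPerm g σ ∧ Equiv.Perm.sign σ = 1) →
        ¬ IsMultFree H) ∧
    (∀ H : Subgroup (Equiv.Perm (Fin (2 * 24))),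
      (∀ g : Equiv.Perm (Fin (2 * 24)), g ∈ H ↔
        ∃ σ : Equiv.Perm (Fin 24), InducedPairPerm g σ ∧ Equiv.Perm.sign σ = 1) →
      IsMultFree H) := by
  exact ⟨fun k hk H hH => part_one k hk H hH, fun H hH => part_two H hH⟩
end
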